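/- arXiv:2407.02365 — 2 statements merged into one kernel-verified Lean document; each statement's English description precedes it below -/
import Mathlib

section
/- Let k ∈ (0,1). Then I_1^+ = −2(1−2k²) and I_2^+ = 16(1 − k² + k⁴). Moreover, if k² is a rational number, then Kuznetsov's moment integral I_n^+ is a rational number for every n ∈ ℕ. -/
open MeasureTheory Real

/-- The complete elliptic integral of the first kind `K(k)`. -/
noncomputable def ellipticK (k : ℝ) : ℝ :=
  ∫ θ in (0 : ℝ)..(π / 2), (1 - k ^ 2 * Real.sin θ ^ 2) ^ (-(1 / 2) : ℝ)

/-- Kuznetsov's moment integral `I_n^+`, realizing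
`(1/2)∫_ℝ x^n dx/(cos(√x K) + cosh(√x K'))` with `√x = i√(−x)` for `x < 0`. -/
noncomputable def Iplus (k : ℝ) (n : ℕ) : ℝ :=
  (1 / 2) * (∫ x in Set.Ioi (0 : ℝ), x ^ n /
      (Real.cos (ellipticK k * Real.sqrt x) +
        Real.cosh (ellipticK (Real.sqrt (1 - k ^ 2)) * Real.sqrt x)))
  + ((-1 : ℝ) ^ n / 2) * (∫ x in Set.Ioi (0 : ℝ), x ^ n /
      (Real.cosh (ellipticK k * Real.sqrt x) +
        Real.cos (ellipticK (Real.sqrt (1 - k ^ 2)) * Real.sqrt x)))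

/-- Kuznetsov's moment integral `I_n^−`, realizing
`∫_ℝ x^{n+1} dx/(cos(√x K) − cosh(√x K'))` with `√x = i√(−x)` for `x < 0`. -/
noncomputable def Iminus (k : ℝ) (n : ℕ) : ℝ :=
  (∫ x in Set.Ioi (0 : ℝ), x ^ (n + 1) /
      (Real.cos (ellipticK k * Real.sqrt x) -
        Real.cosh (ellipticK (Real.sqrt (1 - k ^ 2)) * Real.sqrt x)))
  + (-1 : ℝ) ^ (n + 1) * (∫ x in Set.Ioi (0 : ℝ), x ^ (n + 1) /
      (Real.cosh (ellipticK k * Real.sqrt x) -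
        Real.cos (ellipticK (Real.sqrt (1 - k ^ 2)) * Real.sqrt x)))

/-!
The substitution `x = s²` turns `I_n^+` into `(-1)ⁿ F⁽²ⁿ⁺¹⁾(0)` for the generating function
`F(u) = ∫₀^∞ sinh(su)/(cosh(as) + cos(bs)) ds + ∫₀^∞ sin(su)/(cos(as) + cosh(bs)) ds` with `a = K`,
`b = K'`, which is holomorphic on the rectangle with vertices `±a ± bi`.

The function `F` has simple poles at `±a`, and rotating the contour by a right angle shows that `F`
has the antiperiods `a ± bi`, i.e. `F` is an elliptic function of Jacobi type in disguise. The
antiperiodicity makes `|F'' - 2F³ - BF|` periodic, and the constant `B` can be chosen so that this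
defect vanishes at the pole; by the maximum principle it vanishes identically, and integrating once
gives `F'² = F⁴ + BF² + F'(0)²`.

On the real axis `F` increases from `0` to `∞` on `[0, a)`, hence
`a = ∫₀^∞ dt/√(t⁴ + Bt² + F'(0)²)`, and likewise `b` with `-B` for `B`. The complete elliptic
integrals are of this form with `F'(0) = 1` and `B = 2(1 - 2k²)`, and monotonicity shows that `a`
and `b` determine the quartic. Finally, by the differential equation, `F⁽²ⁿ⁺¹⁾(0)` is an integer
polynomial in `B`.
-/

namespace Kuznetsov

open Filter Topology Set
open Complex (I)
open scoped ComplexConjugate Interval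

/-! ### Families of successive derivatives -/

lemma eqOn_of_hasDerivAt_succ {𝕜 E : Type*} [NontriviallyNormedField 𝕜] [NormedAddCommGroup E]
    [NormedSpace 𝕜 E] {f g : ℕ → 𝕜 → E} {U : Set 𝕜} (hU : IsOpen U)
    (hf : ∀ n, ∀ u ∈ U, HasDerivAt (f n) (f (n + 1) u) u)
    (hg : ∀ n, ∀ u ∈ U, HasDerivAt (g n) (g (n + 1) u) u) (h0 : EqOn (f 0) (g 0) U) (n : ℕ) :
    EqOn (f n) (g n) U := by
  induction n with
  | zero => exact h0
  | succ n ih =>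
    intro u hu
    exact (hf n u hu).unique
      ((hg n u hu).congr_of_eventuallyEq (ih.eventuallyEq_of_mem (hU.mem_nhds hu)))

lemma hasDerivAt_pow_mul_comp_mul {f : ℕ → ℂ → ℂ} {n : ℕ} (c : ℂ) {u : ℂ}
    (h : HasDerivAt (f n) (f (n + 1) (c * u)) (c * u)) :
    HasDerivAt (fun z => c ^ n * f n (c * z)) (c ^ (n + 1) * f (n + 1) (c * u)) u :=
  ((h.comp u ((hasDerivAt_id u).const_mul c)).const_mul (c ^ n)).congr_deriv (by
    rw [pow_succ]; ring)

/-! ### Exponential moments of a weight -/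

/-- The weight `w` is continuous and `O(e^{-cs})` on `[0, ∞)`. -/
def HasExpDecay (w : ℝ → ℝ) (c : ℝ) : Prop :=
  Continuous w ∧ ∃ C, ∀ s : ℝ, 0 ≤ s → |w s| ≤ C * Real.exp (-c * s)

/-- The exponential moment `∫₀^∞ sⁿ e^{su} w(s) ds`, which is the `n`-th derivative in `u` of the
Laplace-type transform `∫₀^∞ e^{su} w(s) ds`. -/
noncomputable def expMoment (w : ℝ → ℝ) (n : ℕ) (u : ℂ) : ℂ :=
  ∫ s in Ioi (0 : ℝ), (s : ℂ) ^ n * Complex.exp (s * u) * (w s : ℂ)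

lemma integrableOn_pow_mul_exp_neg_mul (n : ℕ) {ε : ℝ} (hε : 0 < ε) :
    IntegrableOn (fun s : ℝ => s ^ n * Real.exp (-ε * s)) (Ioi 0) := by
  have hn : (-1 : ℝ) < n := by linarith [n.cast_nonneg (α := ℝ)]
  simpa using integrableOn_rpow_mul_exp_neg_mul_rpow hn one_pos hε

lemma norm_expMoment_integrand_le {w : ℝ → ℝ} {c C : ℝ}
    (hC : ∀ s : ℝ, 0 ≤ s → |w s| ≤ C * Real.exp (-c * s)) (n : ℕ) {u : ℂ} {ε : ℝ}
    (hu : u.re ≤ c - ε) {s : ℝ} (hs : 0 < s) :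
    ‖(s : ℂ) ^ n * Complex.exp (s * u) * (w s : ℂ)‖ ≤ C * (s ^ n * Real.exp (-ε * s)) := by
  have hC0 : 0 ≤ C := by simpa using (abs_nonneg _).trans (hC 0 le_rfl)
  calc ‖(s : ℂ) ^ n * Complex.exp (s * u) * (w s : ℂ)‖
      = s ^ n * Real.exp (s * u.re) * |w s| := by simp [Complex.norm_exp, abs_of_pos hs]
    _ ≤ s ^ n * Real.exp (s * u.re) * (C * Real.exp (-c * s)) := by gcongr; exact hC s hs.le
    _ = C * (s ^ n * Real.exp (s * u.re + -c * s)) := by rw [Real.exp_add]; ring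
    _ ≤ C * (s ^ n * Real.exp (-ε * s)) := by gcongr; nlinarith

lemma continuous_expMoment_integrand {w : ℝ → ℝ} (hw : Continuous w) (n : ℕ) (u : ℂ) :
    Continuous fun s : ℝ => (s : ℂ) ^ n * Complex.exp (s * u) * (w s : ℂ) := by
  fun_prop

lemma HasExpDecay.integrableOn {w : ℝ → ℝ} {c : ℝ} (hw : HasExpDecay w c) (n : ℕ) {u : ℂ}
    (hu : u.re < c) :
    IntegrableOn (fun s : ℝ => (s : ℂ) ^ n * Complex.exp (s * u) * (w s : ℂ)) (Ioi 0) := by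
  obtain ⟨hcont, C, hC⟩ := hw
  refine Integrable.mono' ((integrableOn_pow_mul_exp_neg_mul n (sub_pos.2 hu)).const_mul C)
    (continuous_expMoment_integrand hcont n u).aestronglyMeasurable ?_
  filter_upwards [ae_restrict_mem measurableSet_Ioi] with s hs
  exact norm_expMoment_integrand_le hC n (by linarith) hs

lemma HasExpDecay.hasDerivAt_expMoment {w : ℝ → ℝ} {c : ℝ} (hw : HasExpDecay w c) (n : ℕ) {u : ℂ}
    (hu : u.re < c) : HasDerivAt (expMoment w n) (expMoment w (n + 1) u) u := by
  have hint := hw.integrableOn n hu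
  obtain ⟨hcont, C, hC⟩ := hw
  obtain ⟨ε, hε, hεu⟩ : ∃ ε > 0, u.re + 2 * ε = c := ⟨(c - u.re) / 2, by linarith, by ring⟩
  refine (hasDerivAt_integral_of_dominated_loc_of_deriv_le (s := {z : ℂ | z.re < u.re + ε})
    (F' := fun z (s : ℝ) => (s : ℂ) ^ (n + 1) * Complex.exp (s * z) * (w s : ℂ))
    (bound := fun s => C * (s ^ (n + 1) * Real.exp (-ε * s)))
    ((isOpen_lt Complex.continuous_re continuous_const).mem_nhds (by simp [hε]))
    (.of_forall fun z => (continuous_expMoment_integrand hcont n z).aestronglyMeasurable) hint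
    (continuous_expMoment_integrand hcont (n + 1) u).aestronglyMeasurable ?_
    ((integrableOn_pow_mul_exp_neg_mul (n + 1) hε).const_mul C) (.of_forall fun s z _ => ?_)).2
  · filter_upwards [ae_restrict_mem measurableSet_Ioi] with s hs z hz
    have hz' : z.re < u.re + ε := hz
    exact norm_expMoment_integrand_le hC (n + 1) (by linarith [hz']) hs
  · exact ((((hasDerivAt_id z).const_mul (s : ℂ)).cexp.const_mul ((s : ℂ) ^ n)).mul_const
      (w s : ℂ)).congr_deriv (by simp only [id]; ring)

lemma expMoment_conj (w : ℝ → ℝ) (n : ℕ) (u : ℂ) :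
    expMoment w n (conj u) = conj (expMoment w n u) := by
  simp only [expMoment, ← integral_conj, map_mul, map_pow, Complex.conj_ofReal, ← Complex.exp_conj]

lemma expMoment_zero_right (w : ℝ → ℝ) (n : ℕ) :
    expMoment w n 0 = ((∫ s in Ioi (0 : ℝ), s ^ n * w s : ℝ) : ℂ) := by
  simp only [expMoment, mul_zero, Complex.exp_zero, mul_one, ← integral_complex_ofReal,
    Complex.ofReal_mul, Complex.ofReal_pow]

/-! ### Rotating the half-line by a right angle -/

lemma integral_square_boundary_eq {h : ℂ → ℂ} (hd : DifferentiableOn ℂ h (Ici 0 ×ℂ Ici 0)) {R : ℝ}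
    (hR : 0 ≤ R) :
    (∫ x in (0 : ℝ)..R, h x) - I * (∫ y in (0 : ℝ)..R, h (y * I))
      = (∫ x in (0 : ℝ)..R, h (x + R * I)) - I * ∫ y in (0 : ℝ)..R, h (R + y * I) := by
  have hsub : [[(0 : ℂ).re, (R + R * I : ℂ).re]] ×ℂ [[(0 : ℂ).im, (R + R * I : ℂ).im]]
      ⊆ Ici 0 ×ℂ Ici 0 := by
    refine Complex.reProdIm_subset_iff'.2 (Or.inl ⟨?_, ?_⟩) <;>
      simpa [uIcc_of_le hR] using Icc_subset_Ici_self
  have hcauchy := Complex.integral_boundary_rect_eq_zero_of_differentiableOn h 0 (R + R * I)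
    (hd.mono hsub)
  simp only [Complex.zero_re, Complex.zero_im, Complex.add_re, Complex.add_im,
    Complex.ofReal_re, Complex.ofReal_im, Complex.ofReal_zero,
    Complex.mul_re, Complex.mul_im, Complex.I_re, Complex.I_im, smul_eq_mul,
    mul_zero, mul_one, zero_mul, add_zero, zero_add, sub_zero] at hcauchy
  linear_combination hcauchy

section QuadrantRotation

variable {h : ℂ → ℂ} {C c : ℝ}

lemma integrableOn_of_norm_le_exp {f : ℝ → ℂ} (hc : 0 < c) (hf : ContinuousOn f (Ioi 0))
    (hb : ∀ x ∈ Ioi (0 : ℝ), ‖f x‖ ≤ C * Real.exp (-c * x)) : IntegrableOn f (Ioi 0) := by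
  have hexp : IntegrableOn (fun s : ℝ => C * Real.exp (-c * s)) (Ioi 0) := by
    simpa [IntegrableOn] using (integrableOn_pow_mul_exp_neg_mul 0 hc).const_mul C
  refine Integrable.mono' hexp (hf.aestronglyMeasurable measurableSet_Ioi) ?_
  filter_upwards [ae_restrict_mem measurableSet_Ioi] with x hx using hb x hx

lemma tendsto_far_sides_zero (hc : 0 < c)
    (hb : ∀ z ∈ Ici 0 ×ℂ Ici 0, ‖h z‖ ≤ C * Real.exp (-c * (z.re + z.im))) :
    Tendsto (fun R : ℝ => (∫ x in (0 : ℝ)..R, h (x + R * I))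
      - I * ∫ y in (0 : ℝ)..R, h (R + y * I)) atTop (𝓝 0) := by
  have hC : 0 ≤ C := by
    have := (norm_nonneg _).trans (hb 0 (by simp [Complex.mem_reProdIm]))
    simpa using this
  have hlim : Tendsto (fun R : ℝ => 2 * C * (R ^ (1 : ℝ) * Real.exp (-c * R))) atTop (𝓝 0) := by
    simpa using (tendsto_rpow_mul_exp_neg_mul_atTop_nhds_zero 1 c hc).const_mul (2 * C)
  have hside : ∀ {R : ℝ} {f : ℝ → ℂ}, 0 ≤ R →
      (∀ x ∈ Ioc 0 R, ‖f x‖ ≤ C * Real.exp (-c * (x + R))) →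
      ‖∫ x in (0 : ℝ)..R, f x‖ ≤ C * Real.exp (-c * R) * R := by
    intro R f hR hf
    have := intervalIntegral.norm_integral_le_of_norm_le_const (a := 0) (b := R) (f := f)
      (C := C * Real.exp (-c * R)) fun x hx => by
        rw [uIoc_of_le hR] at hx
        refine (hf x hx).trans ?_
        gcongr C * Real.exp ?_
        nlinarith [hx.1]
    rwa [sub_zero, abs_of_nonneg hR] at this
  refine squeeze_zero_norm' ?_ hlim
  filter_upwards [eventually_ge_atTop 0] with R hR
  have htop := hside hR fun x hx => by
    simpa using hb (x + R * I) (by simp [Complex.mem_reProdIm, hx.1.le, hR])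
  have hright := hside hR fun y hy => by
    simpa [add_comm] using hb (R + y * I) (by simp [Complex.mem_reProdIm, hy.1.le, hR])
  refine (norm_sub_le _ _).trans ?_
  rw [norm_mul, Complex.norm_I, one_mul, Real.rpow_one]
  linarith

lemma quadrant_rotation (hc : 0 < c) (hd : DifferentiableOn ℂ h (Ici 0 ×ℂ Ici 0))
    (hb : ∀ z ∈ Ici 0 ×ℂ Ici 0, ‖h z‖ ≤ C * Real.exp (-c * (z.re + z.im))) :
    IntegrableOn (fun x : ℝ => h x) (Ioi 0) ∧ IntegrableOn (fun y : ℝ => h (y * I)) (Ioi 0) ∧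
      ∫ x in Ioi (0 : ℝ), h x = I * ∫ y in Ioi (0 : ℝ), h (y * I) := by
  have hx : IntegrableOn (fun x : ℝ => h x) (Ioi 0) := by
    have hmem : MapsTo (fun x : ℝ => (x : ℂ)) (Ioi 0) (Ici 0 ×ℂ Ici 0) := fun x hx => by
      simpa [Complex.mem_reProdIm] using le_of_lt (mem_Ioi.1 hx)
    exact integrableOn_of_norm_le_exp hc (hd.continuousOn.comp (by fun_prop) hmem)
      fun x hx => by simpa using hb x (hmem hx)
  have hy : IntegrableOn (fun y : ℝ => h (y * I)) (Ioi 0) := by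
    have hmem : MapsTo (fun y : ℝ => (y * I : ℂ)) (Ioi 0) (Ici 0 ×ℂ Ici 0) := fun y hy => by
      simpa [Complex.mem_reProdIm] using le_of_lt (mem_Ioi.1 hy)
    exact integrableOn_of_norm_le_exp hc (hd.continuousOn.comp (by fun_prop) hmem)
      fun y hy => by simpa using hb _ (hmem hy)
  refine ⟨hx, hy, sub_eq_zero.1 (tendsto_nhds_unique ?_ (tendsto_far_sides_zero hc hb))⟩
  refine ((intervalIntegral_tendsto_integral_Ioi 0 hx tendsto_id).sub
    ((intervalIntegral_tendsto_integral_Ioi 0 hy tendsto_id).const_mul I)).congr' ?_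
  filter_upwards [eventually_ge_atTop 0] with R hR using integral_square_boundary_eq hd hR

end QuadrantRotation

/-! ### The kernels -/

lemma sinh_re_le_norm_cosh (z : ℂ) : Real.sinh z.re ≤ ‖Complex.cosh z‖ := by
  have h := norm_sub_norm_le (Complex.exp z) (-Complex.exp (-z))
  rw [norm_neg, Complex.norm_exp, Complex.norm_exp, sub_neg_eq_add, Complex.neg_re] at h
  rw [Complex.cosh, norm_div, Complex.norm_ofNat, Real.sinh_eq]
  gcongr

lemma norm_sinh_le_exp_abs_re (z : ℂ) : ‖Complex.sinh z‖ ≤ Real.exp |z.re| := by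
  have h := norm_sub_le (Complex.exp z) (Complex.exp (-z))
  rw [Complex.norm_exp, Complex.norm_exp, Complex.neg_re] at h
  have h1 := Real.exp_le_exp.2 (le_abs_self z.re)
  have h2 := Real.exp_le_exp.2 (neg_le_abs z.re)
  rw [Complex.sinh, norm_div, Complex.norm_ofNat]
  linarith

lemma cosh_ne_zero_of_abs_im_le {z : ℂ} {M : ℝ} (h0 : 0 ≤ z.re) (hz : |z.im| ≤ M * z.re) :
    Complex.cosh z ≠ 0 := by
  rcases h0.eq_or_lt with h0 | h0
  · have him : z.im = 0 := by simpa [← h0] using hz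
    simp [Complex.ext (w := 0) h0.symm him]
  · exact norm_pos_iff.1 ((Real.sinh_pos_iff.2 h0).trans_le (sinh_re_le_norm_cosh z))

lemma norm_inv_cosh_le_of_one_le_re {z : ℂ} (hz : 1 ≤ z.re) :
    ‖(Complex.cosh z)⁻¹‖ ≤ 4 * Real.exp (-z.re) := by
  have hexp : 2 ≤ Real.exp z.re := by linarith [Real.add_one_le_exp z.re]
  have hneg : Real.exp (-z.re) ≤ 1 := Real.exp_le_one_iff.2 (by linarith)
  have hcosh : Real.exp z.re / 4 ≤ ‖Complex.cosh z‖ := by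
    refine le_trans ?_ (sinh_re_le_norm_cosh z)
    rw [Real.sinh_eq]
    linarith
  calc ‖(Complex.cosh z)⁻¹‖ = ‖Complex.cosh z‖⁻¹ := norm_inv _
    _ ≤ (Real.exp z.re / 4)⁻¹ := by gcongr
    _ = 4 * Real.exp (-z.re) := by rw [Real.exp_neg, inv_div, div_eq_mul_inv]

lemma exists_norm_inv_cosh_le (M : ℝ) :
    ∃ C, 0 ≤ C ∧ ∀ z : ℂ, 0 ≤ z.re → |z.im| ≤ M * z.re →
      ‖(Complex.cosh z)⁻¹‖ ≤ C * Real.exp (-z.re) := by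
  set S : Set ℂ := {z | z.re ∈ Icc 0 1 ∧ |z.im| ≤ M * z.re}
  have hS : IsCompact S := by
    refine (isCompact_Icc.reProdIm (isCompact_Icc (a := -|M|) (b := |M|))).of_isClosed_subset
      ((isClosed_Icc.preimage Complex.continuous_re).inter
        (isClosed_le Complex.continuous_im.abs (Complex.continuous_re.const_mul M)))
      fun z hz => ⟨hz.1, abs_le.1 ?_⟩
    calc |z.im| ≤ M * z.re := hz.2
      _ ≤ |M| * 1 := mul_le_mul (le_abs_self M) hz.1.2 hz.1.1 (abs_nonneg M)
      _ = |M| := mul_one _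
  have hcont : ContinuousOn (fun z => (Complex.cosh z)⁻¹) S :=
    Complex.continuous_cosh.continuousOn.inv₀ fun z hz => cosh_ne_zero_of_abs_im_le hz.1.1 hz.2
  obtain ⟨B, hB⟩ := hS.exists_bound_of_continuousOn hcont
  refine ⟨max 4 (B * Real.exp 1), le_max_of_le_left (by norm_num), fun z h0 hz => ?_⟩
  rcases le_total z.re 1 with h1 | h1
  · have hBz := hB z ⟨⟨h0, h1⟩, hz⟩
    have hB0 : 0 ≤ B := (norm_nonneg _).trans hBz
    calc ‖(Complex.cosh z)⁻¹‖ ≤ B * Real.exp 0 := by simpa using hBz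
      _ ≤ B * Real.exp (1 + -z.re) := by gcongr; linarith
      _ = B * Real.exp 1 * Real.exp (-z.re) := by rw [Real.exp_add, mul_assoc]
      _ ≤ max 4 (B * Real.exp 1) * Real.exp (-z.re) := by gcongr; exact le_max_right _ _
  · refine (norm_inv_cosh_le_of_one_le_re h1).trans ?_
    gcongr
    exact le_max_left _ _

lemma cosh_add_cos_eq (a b : ℝ) (z : ℂ) :
    Complex.cosh (a * z) + Complex.cos (b * z)
      = 2 * Complex.cosh (z * ((a + b * I) / 2)) * Complex.cosh (z * ((a - b * I) / 2)) := by
  have hadd := Complex.cosh_add (z * ((a + b * I) / 2)) (z * ((a - b * I) / 2))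
  have hsub := Complex.cosh_sub (z * ((a + b * I) / 2)) (z * ((a - b * I) / 2))
  rw [show z * ((a + b * I) / 2) + z * ((a - b * I) / 2) = a * z by ring] at hadd
  rw [show z * ((a + b * I) / 2) - z * ((a - b * I) / 2) = b * z * I by ring,
    Complex.cosh_mul_I] at hsub
  linear_combination hadd + hsub

/-- The kernel `1 / (cos(ps) + cosh(qs))` of the moment integrals. -/
noncomputable def kernel (p q s : ℝ) : ℝ := (Real.cos (p * s) + Real.cosh (q * s))⁻¹

lemma cos_add_cosh_pos (p : ℝ) {q : ℝ} (hq : q ≠ 0) (s : ℝ) :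
    0 < Real.cos (p * s) + Real.cosh (q * s) := by
  rcases eq_or_ne s 0 with rfl | hs
  · simp
  · linarith [Real.neg_one_le_cos (p * s), Real.one_lt_cosh.2 (mul_ne_zero hq hs)]

lemma kernel_pos (p : ℝ) {q : ℝ} (hq : q ≠ 0) (s : ℝ) : 0 < kernel p q s :=
  inv_pos.2 (cos_add_cosh_pos p hq s)

lemma continuous_kernel (p : ℝ) {q : ℝ} (hq : q ≠ 0) : Continuous (kernel p q) :=
  Continuous.inv₀ (by fun_prop) fun s => (cos_add_cosh_pos p hq s).ne'

lemma ofReal_kernel (p q s : ℝ) :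
    (kernel p q s : ℂ) = (Complex.cosh (q * s) + Complex.cos (p * s))⁻¹ := by
  rw [kernel, add_comm]
  push_cast
  rfl

lemma ofReal_kernel_eq_mul_I (p q s : ℝ) :
    (kernel p q s : ℂ) = (Complex.cosh (p * (s * I)) + Complex.cos (q * (s * I)))⁻¹ := by
  rw [ofReal_kernel, ← mul_assoc, ← mul_assoc, Complex.cosh_mul_I, Complex.cos_mul_I, add_comm]

lemma hasExpDecay_kernel (p : ℝ) {q : ℝ} (hq : 0 < q) : HasExpDecay (kernel p q) q := by
  obtain ⟨C, hC0, hC⟩ := exists_norm_inv_cosh_le (|p| / q)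
  have hfactor : ∀ r : ℝ, |r| = |p| → ∀ s : ℝ, 0 ≤ s →
      ‖(Complex.cosh (s * ((q + r * I) / 2)))⁻¹‖ ≤ C * Real.exp (-(q * s / 2)) := by
    intro r hr s hs
    have hre : (s * ((q + r * I) / 2) : ℂ).re = q * s / 2 := by simp; ring
    have him : (s * ((q + r * I) / 2) : ℂ).im = r * s / 2 := by simp; ring
    rw [← hre]
    refine hC _ (by rw [hre]; positivity) (le_of_eq ?_)
    rw [hre, him, abs_div, abs_mul, hr, abs_of_nonneg hs, Nat.abs_ofNat]
    field_simp
  refine ⟨continuous_kernel p hq.ne', C ^ 2 / 2, fun s hs => ?_⟩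
  have hplus := hfactor p rfl s hs
  have hminus := hfactor (-p) (abs_neg p) s hs
  rw [Complex.ofReal_neg, neg_mul, ← sub_eq_add_neg] at hminus
  rw [← Real.norm_eq_abs, ← Complex.norm_real, ofReal_kernel, cosh_add_cos_eq, mul_inv, mul_inv,
    norm_mul, norm_mul, norm_inv, Complex.norm_ofNat]
  calc _ ≤ 2⁻¹ * (C * Real.exp (-(q * s / 2))) * (C * Real.exp (-(q * s / 2))) := by gcongr
    _ = C ^ 2 / 2 * (Real.exp (-(q * s / 2)) * Real.exp (-(q * s / 2))) := by ring
    _ = C ^ 2 / 2 * Real.exp (-q * s) := by rw [← Real.exp_add]; ring_nf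

/-- The kernel minus its leading exponential `2e^{-qs}`, so that it decays twice as fast. -/
noncomputable def kernelTail (p q s : ℝ) : ℝ := kernel p q s - 2 * Real.exp (-q * s)

lemma kernelTail_eq_mul (p : ℝ) {q : ℝ} (hq : q ≠ 0) (s : ℝ) :
    kernelTail p q s
      = -kernel p q s * Real.exp (-q * s) * (2 * Real.cos (p * s) + Real.exp (-q * s)) := by
  have hinv : kernel p q s * (Real.cos (p * s) + Real.cosh (q * s)) = 1 :=
    inv_mul_cancel₀ (cos_add_cosh_pos p hq s).ne'
  have hexp : Real.exp (-q * s) * Real.exp (q * s) = 1 := by rw [← Real.exp_add]; simp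
  rw [Real.cosh_eq, ← neg_mul] at hinv
  rw [kernelTail]
  linear_combination 2 * Real.exp (-q * s) * hinv - kernel p q s * hexp

lemma hasExpDecay_kernelTail (p : ℝ) {q : ℝ} (hq : 0 < q) :
    HasExpDecay (kernelTail p q) (2 * q) := by
  obtain ⟨hcont, C, hC⟩ := hasExpDecay_kernel p hq
  have hC0 : 0 ≤ C := by simpa using (abs_nonneg _).trans (hC 0 le_rfl)
  refine ⟨by unfold kernelTail; fun_prop, C * 3, fun s hs => ?_⟩
  have hexp : Real.exp (-q * s) ≤ 1 := Real.exp_le_one_iff.2 (by nlinarith)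
  have hlast : |2 * Real.cos (p * s) + Real.exp (-q * s)| ≤ 3 :=
    abs_le.2 ⟨by linarith [Real.neg_one_le_cos (p * s), Real.exp_pos (-q * s)],
      by linarith [Real.cos_le_one (p * s)]⟩
  rw [kernelTail_eq_mul p hq.ne', abs_mul, abs_mul, abs_neg, Real.abs_exp]
  calc _ ≤ C * Real.exp (-q * s) * Real.exp (-q * s) * 3 := by gcongr; exact hC s hs
    _ = C * 3 * (Real.exp (-q * s) * Real.exp (-q * s)) := by ring
    _ = C * 3 * Real.exp (-(2 * q) * s) := by rw [← Real.exp_add]; ring_nf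

/-! ### The generating function of the moments -/

/-- The `n`-th derivative in `u` of
`½ ∫₀^∞ e^{su} p(s) ds - ½ ∫₀^∞ e^{-su} q(s) ds + ∫₀^∞ sin(su) w(s) ds`; the two exponential parts
carry separate weights so that the pole at the right end of the strip can be split off. -/
noncomputable def mixedMoment (p q w : ℝ → ℝ) (n : ℕ) (u : ℂ) : ℂ :=
  (expMoment p n u - (-1) ^ n * expMoment q n (-u)) / 2
    + (I ^ n * expMoment w n (I * u) - (-I) ^ n * expMoment w n (-(I * u))) / (2 * I)

/-- The `n`-th derivative of the generating function
`∫₀^∞ sinh(su)/(cosh(as) + cos(bs)) ds + ∫₀^∞ sin(su)/(cos(as) + cosh(bs)) ds`,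
whose odd derivatives at `0` are the moments of the two kernels. -/
noncomputable def genFun (a b : ℝ) : ℕ → ℂ → ℂ :=
  mixedMoment (kernel b a) (kernel b a) (kernel a b)

/-- The `n`-th derivative of the regular part at `a` of the generating function: the exponential
`2e^{-as}` of the kernel produces the principal part `1/(a - u)`. -/
noncomputable def regPart (a b : ℝ) : ℕ → ℂ → ℂ :=
  mixedMoment (kernelTail b a) (kernel b a) (kernel a b)

/-- The open rectangle with vertices `±a ± bi`. -/
def rect (a b : ℝ) : Set ℂ := Ioo (-a) a ×ℂ Ioo (-b) b

lemma convex_reProdIm {s t : Set ℝ} (hs : Convex ℝ s) (ht : Convex ℝ t) : Convex ℝ (s ×ℂ t) :=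
  (hs.linear_preimage Complex.reLm).inter (ht.linear_preimage Complex.imLm)

section Rect

variable {a b : ℝ} {u : ℂ}

lemma mem_rect : u ∈ rect a b ↔ |u.re| < a ∧ |u.im| < b := by
  simp only [rect, Complex.mem_reProdIm, mem_Ioo, abs_lt]

lemma isOpen_rect (a b : ℝ) : IsOpen (rect a b) := isOpen_Ioo.reProdIm isOpen_Ioo

lemma convex_rect (a b : ℝ) : Convex ℝ (rect a b) :=
  convex_reProdIm (convex_Ioo _ _) (convex_Ioo _ _)

lemma neg_mem_rect (hu : u ∈ rect a b) : -u ∈ rect a b := by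
  simpa [mem_rect] using hu

lemma conj_mem_rect (hu : u ∈ rect a b) : conj u ∈ rect a b := by
  simpa [mem_rect] using hu

lemma ofReal_mem_rect {x : ℝ} (hx : |x| < a) (hb : 0 < b) : (x : ℂ) ∈ rect a b := by
  simpa [mem_rect] using ⟨hx, hb⟩

lemma zero_mem_rect (ha : 0 < a) (hb : 0 < b) : 0 ∈ rect a b := by
  simpa [mem_rect] using ⟨ha, hb⟩

lemma sub_ne_zero_of_mem_rect (hu : u ∈ rect a b) : (a : ℂ) - u ≠ 0 := fun h => by
  have hre : a = u.re := congrArg Complex.re (sub_eq_zero.1 h)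
  exact ((le_abs_self _).trans_lt (mem_rect.1 hu).1).ne hre.symm

end Rect

section MixedMoment

variable {p q w : ℝ → ℝ} {α β γ : ℝ} {u : ℂ}

lemma hasDerivAt_mixedMoment (hp : HasExpDecay p α) (hq : HasExpDecay q β) (hw : HasExpDecay w γ)
    (n : ℕ) (hα : u.re < α) (hβ : -β < u.re) (hγ : |u.im| < γ) :
    HasDerivAt (mixedMoment p q w n) (mixedMoment p q w (n + 1) u) u := by
  rw [abs_lt] at hγ
  have hleft := hasDerivAt_pow_mul_comp_mul (u := u) (-1)
    (hq.hasDerivAt_expMoment n (by simpa using neg_lt.1 hβ))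
  have hup := hasDerivAt_pow_mul_comp_mul (u := u) I
    (hw.hasDerivAt_expMoment n (by simpa using neg_lt.1 hγ.1))
  have hdown := hasDerivAt_pow_mul_comp_mul (u := u) (-I)
    (hw.hasDerivAt_expMoment n (by simpa using hγ.2))
  simp only [neg_mul, one_mul] at hleft hdown
  exact (((hp.hasDerivAt_expMoment n hα).sub hleft).div_const 2).add
    ((hup.sub hdown).div_const (2 * I))

lemma mixedMoment_conj (p q w : ℝ → ℝ) (n : ℕ) (u : ℂ) :
    mixedMoment p q w n (conj u) = conj (mixedMoment p q w n u) := by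
  simp only [mixedMoment, map_add, map_sub, map_mul, map_div₀, map_pow, map_neg, map_one,
    map_ofNat, Complex.conj_I, ← expMoment_conj, neg_mul, neg_neg]
  ring

lemma ofReal_re_mixedMoment (p q w : ℝ → ℝ) (n : ℕ) (x : ℝ) :
    ((mixedMoment p q w n x).re : ℂ) = mixedMoment p q w n x :=
  Complex.conj_eq_iff_re.1 (by rw [← mixedMoment_conj, Complex.conj_ofReal])

end MixedMoment

section GenFun

variable {a b : ℝ} {u : ℂ}

lemma hasDerivAt_genFun (ha : 0 < a) (hb : 0 < b) (n : ℕ) (hu : u ∈ rect a b) :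
    HasDerivAt (genFun a b n) (genFun a b (n + 1) u) u := by
  obtain ⟨hre, him⟩ := mem_rect.1 hu
  exact hasDerivAt_mixedMoment (hasExpDecay_kernel b ha) (hasExpDecay_kernel b ha)
    (hasExpDecay_kernel a hb) n (abs_lt.1 hre).2 (abs_lt.1 hre).1 him

lemma hasDerivAt_regPart (ha : 0 < a) (hb : 0 < b) (n : ℕ)
    (hu : u ∈ Ioo (-a) (2 * a) ×ℂ Ioo (-b) b) :
    HasDerivAt (regPart a b n) (regPart a b (n + 1) u) u :=
  hasDerivAt_mixedMoment (hasExpDecay_kernelTail b ha) (hasExpDecay_kernel b ha)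
    (hasExpDecay_kernel a hb) n hu.1.2 hu.1.1 (abs_lt.2 hu.2)

lemma genFun_neg (a b : ℝ) (n : ℕ) (u : ℂ) :
    genFun a b n (-u) = (-1) ^ (n + 1) * genFun a b n u := by
  have hI : (-I) ^ n = (-1) ^ n * I ^ n := by rw [← mul_pow, neg_one_mul]
  have hsq : ((-1 : ℂ) ^ n) * (-1) ^ n = 1 := by rw [← mul_pow]; simp
  simp only [genFun, mixedMoment, hI, mul_neg, neg_neg, pow_succ]
  linear_combination (-(I ^ n * expMoment (kernel a b) n (-(I * u))) / (2 * I)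
    - expMoment (kernel b a) n (-u) / 2) * hsq

lemma genFun_I_mul (a b : ℝ) (n : ℕ) (u : ℂ) :
    genFun a b n (I * u) = I * (-I) ^ n * genFun b a n u := by
  have hneg : (-I) ^ n = (-1) ^ n * I ^ n := by rw [← mul_pow, neg_one_mul]
  have hinv : (-1) ^ n * I ^ n * I ^ n = 1 := by rw [← hneg, ← mul_pow]; simp
  have hsq : ((-1 : ℂ) ^ n) * (-1) ^ n = 1 := by rw [← mul_pow]; simp
  have hII : I * (I * u) = -u := by rw [← mul_assoc, Complex.I_mul_I, neg_one_mul]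
  simp only [genFun, mixedMoment, hneg, hII, neg_neg, div_eq_mul_inv, mul_inv, Complex.inv_I]
  linear_combination (I * I ^ n * expMoment (kernel a b) n (-u) / 2) * hsq
    + ((-1) ^ n * I ^ n * I ^ n / 2 * (expMoment (kernel b a) n (I * u)
      - (-1) ^ n * expMoment (kernel b a) n (-(I * u)))) * Complex.I_sq
    - ((expMoment (kernel b a) n (I * u)
      - (-1) ^ n * expMoment (kernel b a) n (-(I * u))) / 2) * hinv

lemma genFun_zero_zero (a b : ℝ) : genFun a b 0 0 = 0 := by
  simp [genFun, mixedMoment]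

lemma genFun_odd_zero (a b : ℝ) (m : ℕ) :
    genFun a b (2 * m + 1) 0 = (((-1) ^ m * (∫ s in Ioi (0 : ℝ), s ^ (2 * m + 1) * kernel a b s)
      + ∫ s in Ioi (0 : ℝ), s ^ (2 * m + 1) * kernel b a s : ℝ) : ℂ) := by
  have hodd : Odd (2 * m + 1) := ⟨m, rfl⟩
  simp only [genFun, mixedMoment, mul_zero, neg_zero, expMoment_zero_right, hodd.neg_pow, one_pow]
  rw [pow_succ I, pow_mul, Complex.I_sq]
  push_cast
  field_simp
  ring

/-- The `n`-th derivative of the principal part `1/(a - u)`. -/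
noncomputable def polarPart (a : ℂ) (n : ℕ) (u : ℂ) : ℂ := n.factorial / (a - u) ^ (n + 1)

lemma hasDerivAt_polarPart {a u : ℂ} (hu : a - u ≠ 0) (n : ℕ) :
    HasDerivAt (polarPart a n) (polarPart a (n + 1) u) u := by
  have hpow : HasDerivAt (fun z => (a - z) ^ (n + 1)) ((n + 1 : ℕ) * (a - u) ^ n * -1) u :=
    ((hasDerivAt_id u).const_sub a).pow (n + 1)
  refine ((hpow.inv (pow_ne_zero _ hu)).const_mul (n.factorial : ℂ)).congr_deriv ?_
  simp only [polarPart, Nat.factorial_succ]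
  push_cast
  field_simp
  ring

lemma expMoment_kernel_zero (ha : 0 < a) (hu : u.re < a) :
    expMoment (kernel b a) 0 u = expMoment (kernelTail b a) 0 u + 2 / (a - u) := by
  have hre : (u - a).re < 0 := by simpa using hu
  have hpole : ∫ s in Ioi (0 : ℝ), 2 * Complex.exp ((u - a) * s) = 2 / (a - u) := by
    rw [integral_const_mul, integral_exp_mul_complex_Ioi hre, Complex.ofReal_zero, mul_zero,
      Complex.exp_zero, neg_div, ← div_neg, neg_sub, mul_one_div]
  rw [← hpole, expMoment, expMoment, ← integral_add
    ((hasExpDecay_kernelTail b ha).integrableOn 0 (by linarith))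
    ((integrableOn_exp_mul_complex_Ioi hre 0).const_mul 2)]
  refine integral_congr_ae (.of_forall fun s => ?_)
  simp only [kernelTail]
  push_cast
  rw [show (u - a) * s = s * u + -a * s by ring, Complex.exp_add]
  ring

lemma genFun_eq_polarPart_add_regPart (ha : 0 < a) (hb : 0 < b) (n : ℕ) :
    EqOn (genFun a b n) (fun u => polarPart a n u + regPart a b n u) (rect a b) := by
  refine eqOn_of_hasDerivAt_succ (g := fun n u => polarPart a n u + regPart a b n u)
    (isOpen_rect a b) (fun n u hu => hasDerivAt_genFun ha hb n hu) (fun n u hu => ?_)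
    (fun u hu => ?_) n
  · exact (hasDerivAt_polarPart (sub_ne_zero_of_mem_rect hu) n).add
      (hasDerivAt_regPart ha hb n ⟨⟨hu.1.1, by linarith [hu.1.2]⟩, hu.2⟩)
  · simp only [genFun, regPart, mixedMoment, polarPart, expMoment_kernel_zero (b := b) ha hu.1.2,
      Nat.factorial_zero, Nat.cast_one, zero_add, pow_one]
    ring

/-! ### Antiperiodicity -/

lemma HasExpDecay.integral_sinh_mul {w : ℝ → ℝ} {c : ℝ} (hw : HasExpDecay w c)
    (hu : |u.re| < c) :
    IntegrableOn (fun s : ℝ => Complex.sinh (s * u) * w s) (Ioi 0) ∧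
    ∫ s in Ioi (0 : ℝ), Complex.sinh (s * u) * w s
      = (expMoment w 0 u - expMoment w 0 (-u)) / 2 := by
  have hplus := hw.integrableOn 0 (abs_lt.1 hu).2
  have hminus := hw.integrableOn 0 (u := -u) (by simpa using neg_lt.1 (abs_lt.1 hu).1)
  have heq : (fun s : ℝ => Complex.sinh (s * u) * w s) = fun s : ℝ =>
      ((s : ℂ) ^ 0 * Complex.exp (s * u) * w s - (s : ℂ) ^ 0 * Complex.exp (s * -u) * w s) / 2 := by
    ext s
    rw [Complex.sinh, mul_neg]
    ring
  rw [heq, integral_div, integral_sub hplus hminus]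
  exact ⟨(hplus.sub hminus).div_const 2, rfl⟩

lemma genFun_zero_eq_integral (ha : 0 < a) (hb : 0 < b) (hu : u ∈ rect a b) :
    IntegrableOn (fun s : ℝ => Complex.sinh (s * u) * kernel b a s) (Ioi 0) ∧
    IntegrableOn (fun s : ℝ => Complex.sinh (s * I * u) * kernel a b s) (Ioi 0) ∧
    genFun a b 0 u = (∫ s in Ioi (0 : ℝ), Complex.sinh (s * u) * kernel b a s)
      - I * ∫ s in Ioi (0 : ℝ), Complex.sinh (s * I * u) * kernel a b s := by
  obtain ⟨hre, him⟩ := mem_rect.1 hu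
  obtain ⟨hint₁, heq₁⟩ := (hasExpDecay_kernel b ha).integral_sinh_mul hre
  obtain ⟨hint₂, heq₂⟩ := (hasExpDecay_kernel a hb).integral_sinh_mul (u := I * u)
    (by simpa using him)
  simp only [← mul_assoc] at hint₂ heq₂
  refine ⟨hint₁, hint₂, ?_⟩
  rw [heq₁, heq₂, genFun, mixedMoment]
  simp only [pow_zero, one_mul, div_eq_mul_inv, mul_inv, Complex.inv_I]
  ring

lemma sinh_add_sinh_mul_inv_eq {z v : ℂ} (h : Complex.cosh (a * z) + Complex.cos (b * z) ≠ 0) :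
    (Complex.sinh (z * (v + (a + b * I) / 2)) + Complex.sinh (z * (v - (a + b * I) / 2)))
        * (Complex.cosh (a * z) + Complex.cos (b * z))⁻¹
      = Complex.sinh (z * v) * (Complex.cosh (z * ((a - b * I) / 2)))⁻¹ := by
  rw [cosh_add_cos_eq] at h ⊢
  have hcosh := right_ne_zero_of_mul (left_ne_zero_of_mul h)
  rw [mul_add, mul_sub, Complex.sinh_add, Complex.sinh_sub, mul_inv, mul_inv]
  linear_combination Complex.sinh (z * v) * (Complex.cosh (z * ((a - b * I) / 2)))⁻¹
    * mul_inv_cancel₀ hcosh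

lemma mul_mem_sector (ha : 0 < a) (hb : 0 < b) {z : ℂ} (hz : z ∈ Ici 0 ×ℂ Ici 0) :
    (z * ((a - b * I) / 2)).re = (a * z.re + b * z.im) / 2 ∧
    0 ≤ (z * ((a - b * I) / 2)).re ∧
    |(z * ((a - b * I) / 2)).im| ≤ (b / a + a / b) * (z * ((a - b * I) / 2)).re := by
  obtain ⟨hx : 0 ≤ z.re, hy : 0 ≤ z.im⟩ := hz
  have hre : (z * ((a - b * I) / 2)).re = (a * z.re + b * z.im) / 2 := by simp; ring
  have him : (z * ((a - b * I) / 2)).im = (a * z.im - b * z.re) / 2 := by simp; ring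
  have hexpand : (b / a + a / b) * ((a * z.re + b * z.im) / 2)
      = (b * z.re + a * z.im) / 2 + (b ^ 2 / a * z.im + a ^ 2 / b * z.re) / 2 := by
    field_simp
    ring
  have hrest : 0 ≤ b ^ 2 / a * z.im + a ^ 2 / b * z.re := by positivity
  rw [hre, him, hexpand, abs_le]
  refine ⟨rfl, by positivity, ?_, ?_⟩ <;> nlinarith [mul_nonneg ha.le hy, mul_nonneg hb.le hx]

lemma norm_sinh_mul_le {z v : ℂ} (hz : z ∈ Ici 0 ×ℂ Ici 0) :
    ‖Complex.sinh (z * v)‖ ≤ Real.exp (z.re * |v.re| + z.im * |v.im|) := by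
  refine (norm_sinh_le_exp_abs_re _).trans (Real.exp_le_exp.2 ?_)
  rw [Complex.mul_re]
  refine (abs_sub _ _).trans_eq ?_
  rw [abs_mul, abs_mul, abs_of_nonneg (show 0 ≤ z.re from hz.1),
    abs_of_nonneg (show 0 ≤ z.im from hz.2)]

lemma sinh_mul_inv_cosh_rotation (ha : 0 < a) (hb : 0 < b) {v : ℂ} (hv : v ∈ rect (a / 2) (b / 2)) :
    ∫ x in Ioi (0 : ℝ), Complex.sinh (x * v) * (Complex.cosh (x * ((a - b * I) / 2)))⁻¹
      = I * ∫ y in Ioi (0 : ℝ),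
        Complex.sinh (y * I * v) * (Complex.cosh (y * I * ((a - b * I) / 2)))⁻¹ := by
  obtain ⟨hre, him⟩ := mem_rect.1 hv
  obtain ⟨C, hC0, hC⟩ := exists_norm_inv_cosh_le (b / a + a / b)
  set c := min (a / 2 - |v.re|) (b / 2 - |v.im|)
  have hc : 0 < c := lt_min (by linarith) (by linarith)
  refine (quadrant_rotation (C := C) (c := c)
    (h := fun z => Complex.sinh (z * v) * (Complex.cosh (z * ((a - b * I) / 2)))⁻¹)
    hc (fun z hz => ?_) fun z hz => ?_).2.2
  · obtain ⟨-, h0, hsector⟩ := mul_mem_sector ha hb hz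
    have hnum : DifferentiableAt ℂ (fun z => Complex.sinh (z * v)) z := by fun_prop
    have hden : DifferentiableAt ℂ (fun z => Complex.cosh (z * ((a - b * I) / 2))) z := by fun_prop
    exact (hnum.mul (hden.inv (cosh_ne_zero_of_abs_im_le h0 hsector))).differentiableWithinAt
  · obtain ⟨hval, h0, hsector⟩ := mul_mem_sector ha hb hz
    have hcosh := hC _ h0 hsector
    rw [hval] at hcosh
    rw [norm_mul]
    calc _ ≤ Real.exp (z.re * |v.re| + z.im * |v.im|)
          * (C * Real.exp (-((a * z.re + b * z.im) / 2))) := by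
          gcongr
          exact norm_sinh_mul_le hz
      _ = C * Real.exp (z.re * |v.re| + z.im * |v.im| + -((a * z.re + b * z.im) / 2)) := by
          rw [Real.exp_add (z.re * |v.re| + z.im * |v.im|)]
          ring
      _ ≤ C * Real.exp (-c * (z.re + z.im)) := by
          gcongr
          linarith [mul_le_mul_of_nonneg_right (min_le_left _ _ : c ≤ a / 2 - |v.re|) hz.1,
            mul_le_mul_of_nonneg_right (min_le_right _ _ : c ≤ b / 2 - |v.im|) hz.2]

lemma genFun_half_shift (ha : 0 < a) (hb : 0 < b) {v : ℂ} (hv : v ∈ rect (a / 2) (b / 2)) :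
    genFun a b 0 (v + (a + b * I) / 2) + genFun a b 0 (v - (a + b * I) / 2) = 0 := by
  have hmem : v + (a + b * I) / 2 ∈ rect a b ∧ v - (a + b * I) / 2 ∈ rect a b := by
    have hre : ((a + b * I) / 2 : ℂ).re = a / 2 := by simp
    have him : ((a + b * I) / 2 : ℂ).im = b / 2 := by simp
    simp only [mem_rect, abs_lt] at hv
    simp only [mem_rect, abs_lt, Complex.add_re, Complex.add_im, Complex.sub_re, Complex.sub_im,
      hre, him]
    refine ⟨⟨⟨?_, ?_⟩, ?_, ?_⟩, ⟨?_, ?_⟩, ?_, ?_⟩ <;> linarith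
  obtain ⟨hp₁, hp₂, hp⟩ := genFun_zero_eq_integral ha hb hmem.1
  obtain ⟨hm₁, hm₂, hm⟩ := genFun_zero_eq_integral ha hb hmem.2
  have hne₁ : ∀ s : ℝ, Complex.cosh (a * s) + Complex.cos (b * s) ≠ 0 := fun s => by
    have := Complex.ofReal_ne_zero.2 (kernel_pos b ha.ne' s).ne'
    rwa [ofReal_kernel, ne_eq, inv_eq_zero] at this
  have hne₂ : ∀ s : ℝ, Complex.cosh (a * (s * I)) + Complex.cos (b * (s * I)) ≠ 0 := fun s => by
    have := Complex.ofReal_ne_zero.2 (kernel_pos a hb.ne' s).ne'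
    rwa [ofReal_kernel_eq_mul_I, ne_eq, inv_eq_zero] at this
  have hreal := integral_add hp₁ hm₁
  have himag := integral_add hp₂ hm₂
  simp only [← add_mul, ofReal_kernel b, sinh_add_sinh_mul_inv_eq (hne₁ _)] at hreal
  simp only [← add_mul, ofReal_kernel_eq_mul_I a, sinh_add_sinh_mul_inv_eq (hne₂ _)] at himag
  have hrot := sinh_mul_inv_cosh_rotation ha hb hv
  simp only [ofReal_kernel b, ofReal_kernel_eq_mul_I a] at hp hm
  rw [hp, hm]
  linear_combination hrot - hreal + I * himag

lemma genFun_add_antiperiod (ha : 0 < a) (hb : 0 < b) (n : ℕ) (hu : u ∈ rect a b)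
    (hu' : u + (a + b * I) ∈ rect a b) : genFun a b n (u + (a + b * I)) = -genFun a b n u := by
  have hU : IsOpen (rect a b ∩ (· + (a + b * I : ℂ)) ⁻¹' rect a b) :=
    (isOpen_rect a b).inter ((isOpen_rect a b).preimage (by fun_prop))
  refine eqOn_of_hasDerivAt_succ (f := fun n u => genFun a b n (u + (a + b * I)))
    (g := fun n u => -genFun a b n u) hU
    (fun n u hu => (hasDerivAt_genFun ha hb n hu.2).comp_add_const u _)
    (fun n u hu => (hasDerivAt_genFun ha hb n hu.1).neg) (fun u hu => ?_) n ⟨hu, hu'⟩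
  have hmid : u + (a + b * I) / 2 ∈ rect (a / 2) (b / 2) := by
    obtain ⟨hu, hu'⟩ := hu
    have hre : (a + b * I : ℂ).re = a := by simp
    have him : (a + b * I : ℂ).im = b := by simp
    have hre₂ : ((a + b * I) / 2 : ℂ).re = a / 2 := by simp
    have him₂ : ((a + b * I) / 2 : ℂ).im = b / 2 := by simp
    simp only [mem_rect, mem_preimage, abs_lt, Complex.add_re, Complex.add_im, hre, him] at hu hu'
    simp only [mem_rect, abs_lt, Complex.add_re, Complex.add_im, hre₂, him₂]
    refine ⟨⟨?_, ?_⟩, ?_, ?_⟩ <;> linarith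
  have hshift := genFun_half_shift ha hb hmid
  rw [add_sub_cancel_right, add_assoc, add_halves] at hshift
  exact eq_neg_of_add_eq_zero_left hshift

lemma genFun_add_conj_antiperiod (ha : 0 < a) (hb : 0 < b) (n : ℕ) (hu : u ∈ rect a b)
    (hu' : u + (a - b * I) ∈ rect a b) : genFun a b n (u + (a - b * I)) = -genFun a b n u := by
  have hconj : conj (u + (a - b * I)) = conj u + (a + b * I) := by simp
  have h := genFun_add_antiperiod ha hb n (conj_mem_rect hu) (hconj ▸ conj_mem_rect hu')
  rw [← hconj, genFun, mixedMoment_conj, mixedMoment_conj, ← map_neg] at h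
  exact star_injective h

end GenFun

/-! ### The pole at `a` -/

lemma eqOn_iteratedDeriv_of_hasDerivAt_succ {𝕜 E : Type*} [NontriviallyNormedField 𝕜]
    [NormedAddCommGroup E] [NormedSpace 𝕜 E] {f : ℕ → 𝕜 → E} {U : Set 𝕜} (hU : IsOpen U)
    (hf : ∀ n, ∀ u ∈ U, HasDerivAt (f n) (f (n + 1) u) u) (n : ℕ) :
    EqOn (iteratedDeriv n (f 0)) (f n) U := by
  induction n with
  | zero => rw [iteratedDeriv_zero]; exact eqOn_refl _ _
  | succ n ih =>
    intro u hu
    rw [iteratedDeriv_succ, (ih.eventuallyEq_of_mem (hU.mem_nhds hu)).deriv_eq, (hf n u hu).deriv]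

lemma eqOn_of_eqOn_inter {f g : ℂ → ℂ} {U V : Set ℂ} (hU : IsOpen U) (hUc : IsPreconnected U)
    (hf : DifferentiableOn ℂ f U) (hg : DifferentiableOn ℂ g U) (hV : IsOpen V)
    (hne : (U ∩ V).Nonempty) (h : EqOn f g (U ∩ V)) : EqOn f g U := by
  obtain ⟨z, hz⟩ := hne
  exact (hf.analyticOnNhd hU).eqOn_of_preconnected_of_eventuallyEq (hg.analyticOnNhd hU) hUc hz.1
    (h.eventuallyEq_of_mem ((hU.inter hV).mem_nhds hz))

section Pole

variable {a b : ℝ} {v : ℂ}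

lemma hasDerivAt_regPart_const_add (ha : 0 < a) (hb : 0 < b) (n : ℕ) (hv : v ∈ rect a b) :
    HasDerivAt (fun v => regPart a b n (a + v)) (regPart a b (n + 1) (a + v)) v := by
  refine (hasDerivAt_regPart ha hb n ?_).comp_const_add (a : ℂ) v
  simp only [Complex.mem_reProdIm, Complex.add_re, Complex.add_im, Complex.ofReal_re,
    Complex.ofReal_im, zero_add]
  exact ⟨⟨by linarith [hv.1.1], by linarith [hv.1.2]⟩, hv.2⟩

lemma hasDerivAt_regPart_const_sub (ha : 0 < a) (hb : 0 < b) (n : ℕ) (hv : v ∈ rect a b) :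
    HasDerivAt (fun v => regPart a b n (a - v)) (-regPart a b (n + 1) (a - v)) v := by
  have h := hasDerivAt_regPart_const_add ha hb n (neg_mem_rect hv)
  simp only [← sub_eq_add_neg] at h
  simpa only [neg_one_smul, Function.comp_def, ← sub_eq_add_neg] using
    h.scomp v (hasDerivAt_neg v)

lemma genFun_const_add (ha : 0 < a) (hb : 0 < b) (hv : a + v ∈ rect a b) :
    genFun a b 0 (a + v) = regPart a b 0 (a + v) - 1 / v := by
  rw [genFun_eq_polarPart_add_regPart ha hb 0 hv]
  simp only [polarPart, Nat.factorial_zero, Nat.cast_one, zero_add, pow_one, sub_add_cancel_left,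
    div_neg]
  ring

lemma sub_mul_I_mem_rect (hb : 0 < b) (hv : v ∈ Ioo (-a) a ×ℂ Ioo 0 b) : v - b * I ∈ rect a b := by
  obtain ⟨hre, him⟩ := hv
  refine ⟨by simpa using hre, ?_⟩
  simp only [mem_preimage, Complex.sub_im, Complex.im_ofReal_mul,
    Complex.I_im, mul_one]
  exact ⟨by linarith [him.1], by linarith [him.2]⟩

lemma genFun_sub_mul_I_of_re_neg (ha : 0 < a) (hb : 0 < b) (hv : v ∈ Ioo (-a) 0 ×ℂ Ioo 0 b) :
    genFun a b 0 (v - b * I) - 1 / v = -regPart a b 0 (a + v) := by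
  have hlow := sub_mul_I_mem_rect hb ⟨⟨hv.1.1, hv.1.2.trans ha⟩, hv.2⟩
  have heq : v - b * I + (a + b * I) = a + v := by ring
  have hright : a + v ∈ rect a b := by
    simp only [rect, Complex.mem_reProdIm, Complex.add_re, Complex.add_im, Complex.ofReal_re,
      Complex.ofReal_im, zero_add]
    exact ⟨⟨by linarith [hv.1.1], by linarith [hv.1.2]⟩, by linarith [hv.2.1], hv.2.2⟩
  have hshift := genFun_add_antiperiod ha hb 0 hlow (heq ▸ hright)
  rw [heq, genFun_const_add ha hb hright] at hshift
  linear_combination hshift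

lemma genFun_sub_mul_I_of_re_pos (ha : 0 < a) (hb : 0 < b) (hv : v ∈ Ioo 0 a ×ℂ Ioo 0 b) :
    genFun a b 0 (v - b * I) - 1 / v = regPart a b 0 (a - v) := by
  have hlow := sub_mul_I_mem_rect hb ⟨⟨by linarith [hv.1.1], hv.1.2⟩, hv.2⟩
  have heq : v - a + (a - b * I) = v - b * I := by ring
  have hleft : a + -v ∈ rect a b := by
    simp only [rect, Complex.mem_reProdIm, Complex.add_re, Complex.add_im, Complex.ofReal_re,
      Complex.ofReal_im, zero_add, Complex.neg_re, Complex.neg_im, mem_Ioo]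
    refine ⟨⟨?_, ?_⟩, ?_, ?_⟩ <;> linarith [hv.1.1, hv.1.2, hv.2.1, hv.2.2]
  have hneg : v - a = -(a + -v) := by ring
  have hshift := genFun_add_conj_antiperiod ha hb 0 (hneg ▸ neg_mem_rect hleft) (heq ▸ hlow)
  rw [heq, hneg, genFun_neg, genFun_const_add ha hb hleft] at hshift
  rw [hshift, ← sub_eq_add_neg]
  ring

/-- Below the real axis the two antiperiods continue `F(v - bi)` to the left and to the right of
`v = 0`; comparing the two expressions reflects the regular part in its centre `a`. -/
lemma regPart_zero_reflect (ha : 0 < a) (hb : 0 < b) :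
    EqOn (fun v => -regPart a b 0 (a + v)) (fun v => regPart a b 0 (a - v)) (rect a b) := by
  set U := Ioo (-a) a ×ℂ Ioo 0 b with hU
  have hUrect : U ⊆ rect a b := fun v hv => ⟨hv.1, by linarith [hv.2.1], hv.2.2⟩
  have hUo : IsOpen U := isOpen_Ioo.reProdIm isOpen_Ioo
  have hUc : IsPreconnected U := (convex_reProdIm (convex_Ioo _ _) (convex_Ioo _ _)).isPreconnected
  have hmid : DifferentiableOn ℂ (fun v => genFun a b 0 (v - b * I) - 1 / v) U := fun v hv => by
    have hv0 : v ≠ 0 := fun h => by simpa [h] using hv.2.1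
    have hF := (hasDerivAt_genFun ha hb 0 (sub_mul_I_mem_rect hb hv)).comp_sub_const v (b * I)
    exact (hF.differentiableAt.sub
      ((differentiableAt_const 1).div differentiableAt_id hv0)).differentiableWithinAt
  have hleft : DifferentiableOn ℂ (fun v => -regPart a b 0 (a + v)) (rect a b) := fun v hv =>
    (hasDerivAt_regPart_const_add ha hb 0 hv).neg.differentiableAt.differentiableWithinAt
  have hright : DifferentiableOn ℂ (fun v => regPart a b 0 (a - v)) (rect a b) := fun v hv =>
    (hasDerivAt_regPart_const_sub ha hb 0 hv).differentiableAt.differentiableWithinAt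
  have hmid_left := eqOn_of_eqOn_inter (V := {v | v.re < 0}) hUo hUc hmid (hleft.mono hUrect)
    (isOpen_lt Complex.continuous_re continuous_const) ⟨⟨-a / 2, b / 2⟩, by
      simp only [hU, mem_inter_iff, Complex.mem_reProdIm, mem_Ioo, mem_ofPred_eq]
      refine ⟨⟨⟨?_, ?_⟩, ?_, ?_⟩, ?_⟩ <;> linarith⟩
    fun v hv => genFun_sub_mul_I_of_re_neg ha hb ⟨⟨hv.1.1.1, hv.2⟩, hv.1.2⟩
  have hmid_right := eqOn_of_eqOn_inter (V := {v | 0 < v.re}) hUo hUc hmid (hright.mono hUrect)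
    (isOpen_lt continuous_const Complex.continuous_re) ⟨⟨a / 2, b / 2⟩, by
      simp only [hU, mem_inter_iff, Complex.mem_reProdIm, mem_Ioo, mem_ofPred_eq]
      refine ⟨⟨⟨?_, ?_⟩, ?_, ?_⟩, ?_⟩ <;> linarith⟩
    fun v hv => genFun_sub_mul_I_of_re_pos ha hb ⟨⟨hv.2, hv.1.1.2⟩, hv.1.2⟩
  refine eqOn_of_eqOn_inter (isOpen_rect a b) (convex_rect a b).isPreconnected hleft hright hUo
    ⟨⟨0, b / 2⟩, ?_⟩ fun v hv => (hmid_left hv.2).symm.trans (hmid_right hv.2)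
  simp only [hU, rect, mem_inter_iff, Complex.mem_reProdIm, mem_Ioo]
  refine ⟨⟨⟨?_, ?_⟩, ?_, ?_⟩, ⟨?_, ?_⟩, ?_, ?_⟩ <;> linarith

lemma regPart_reflect (ha : 0 < a) (hb : 0 < b) (n : ℕ) (hv : v ∈ rect a b) :
    regPart a b n (a + v) = (-1) ^ (n + 1) * regPart a b n (a - v) := by
  refine eqOn_of_hasDerivAt_succ (f := fun n v => regPart a b n (a + v))
    (g := fun n v => (-1) ^ (n + 1) * regPart a b n (a - v)) (isOpen_rect a b)
    (fun n v hv => hasDerivAt_regPart_const_add ha hb n hv) (fun n v hv => ?_) (fun v hv => ?_) n hv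
  · exact ((hasDerivAt_regPart_const_sub ha hb n hv).const_mul _).congr_deriv (by ring)
  · linear_combination -regPart_zero_reflect ha hb hv

lemma regPart_even_self (ha : 0 < a) (hb : 0 < b) (j : ℕ) : regPart a b (2 * j) a = 0 := by
  have h := regPart_reflect ha hb (2 * j) (zero_mem_rect ha hb)
  rw [pow_succ, pow_mul, neg_one_sq, one_pow, add_zero, sub_zero] at h
  exact self_eq_neg.1 (by linear_combination h)

lemma exists_regPart_eq_cubic (ha : 0 < a) (hb : 0 < b) :
    ∃ p : ℂ → ℂ, AnalyticAt ℂ p 0 ∧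
      ∀ v, regPart a b 0 (a + v) = v * regPart a b 1 a + v ^ 3 * p v := by
  have h0 := zero_mem_rect ha hb
  have hderiv : ∀ n, ∀ v ∈ rect a b,
      HasDerivAt (fun v => regPart a b n (a + v)) (regPart a b (n + 1) (a + v)) v :=
    fun n v hv => hasDerivAt_regPart_const_add ha hb n hv
  have han : AnalyticAt ℂ (fun v => regPart a b 0 (a + v)) 0 :=
    DifferentiableOn.analyticAt
      (fun v hv => (hderiv 0 v hv).differentiableAt.differentiableWithinAt)
      ((isOpen_rect a b).mem_nhds h0)
  obtain ⟨p, hp, hexp⟩ := han.exists_eq_sum_add_pow_mul 3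
  have htaylor := fun n => eqOn_iteratedDeriv_of_hasDerivAt_succ
    (f := fun n v => regPart a b n (a + v)) (isOpen_rect a b) hderiv n h0
  have hzero : regPart a b 0 a = 0 := regPart_even_self ha hb 0
  have htwo : regPart a b 2 a = 0 := regPart_even_self ha hb 1
  refine ⟨p, hp, fun v => ?_⟩
  rw [hexp v]
  simp only [Finset.sum_range_succ, Finset.sum_range_zero, htaylor, add_zero, mul_zero, hzero, htwo,
    smul_eq_mul, zero_add, pow_one, Nat.factorial_one, Nat.cast_one, div_one]

end Pole

/-! ### A Liouville theorem on the rectangle -/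

section Liouville

variable {a b : ℝ}

/-- The closed triangle with vertices `0`, `a` and `bi`, which meets every orbit of the lattice
generated by `a ± bi` together with the reflections in the coordinate axes. -/
def triangle (a b : ℝ) : Set ℂ := {u | 0 ≤ u.re ∧ 0 ≤ u.im ∧ b * u.re + a * u.im ≤ a * b}

lemma triangle_subset (ha : 0 < a) (hb : 0 < b) : triangle a b ⊆ Icc 0 a ×ℂ Icc 0 b := by
  rintro u ⟨hx, hy, hxy⟩
  exact ⟨⟨hx, le_of_mul_le_mul_left (by nlinarith) hb⟩,
    ⟨hy, le_of_mul_le_mul_left (by nlinarith) ha⟩⟩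

lemma isCompact_triangle (ha : 0 < a) (hb : 0 < b) : IsCompact (triangle a b) := by
  refine (isCompact_Icc.reProdIm isCompact_Icc).of_isClosed_subset ?_ (triangle_subset ha hb)
  exact (isClosed_le continuous_const Complex.continuous_re).inter
    ((isClosed_le continuous_const Complex.continuous_im).inter (isClosed_le
      (by fun_prop : Continuous fun u : ℂ => b * u.re + a * u.im) continuous_const))

lemma eq_vertex_or_mem_rect (ha : 0 < a) (hb : 0 < b) {u : ℂ} (hu : u ∈ triangle a b) :
    u = a ∨ u = b * I ∨ u ∈ rect a b := by
  obtain ⟨⟨hx0, hxa⟩, hy0, hyb⟩ := triangle_subset ha hb hu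
  rcases hxa.lt_or_eq with hxa | hxa
  · rcases hyb.lt_or_eq with hyb | hyb
    · exact .inr (.inr ⟨⟨by linarith, hxa⟩, by linarith, hyb⟩)
    · have hx : u.re = 0 := le_antisymm (le_of_mul_le_mul_left (by nlinarith [hu.2.2]) hb) hx0
      exact .inr (.inl (Complex.ext (by simpa using hx) (by simpa using hyb)))
  · have hy : u.im = 0 := le_antisymm (le_of_mul_le_mul_left (by nlinarith [hu.2.2]) ha) hy0
    exact .inl (Complex.ext (by simpa using hxa) (by simpa using hy))

lemma apply_abs_re_abs_im {α : Type*} {f : ℂ → α} (hneg : ∀ u, f (-u) = f u)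
    (hconj : ∀ u, f (conj u) = f u) (u : ℂ) : f ⟨|u.re|, |u.im|⟩ = f u := by
  rcases abs_choice u.re with hre | hre <;> rcases abs_choice u.im with him | him <;> rw [hre, him]
  · exact hconj u
  · rw [← hconj u, ← hneg (conj u)]
    exact congrArg f (Complex.ext (by simp) (by simp))
  · exact hneg u

lemma exists_mem_triangle_apply_eq {α : Type*} {f : ℂ → α} (hneg : ∀ u, f (-u) = f u)
    (hconj : ∀ u, f (conj u) = f u)
    (hshift : ∀ u ∈ rect a b, u + (a + b * I) ∈ rect a b → f (u + (a + b * I)) = f u)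
    {u : ℂ} (hu : u ∈ rect a b) : ∃ v ∈ triangle a b ∩ rect a b, f v = f u := by
  obtain ⟨hx, hy⟩ := mem_rect.1 hu
  have hx0 := abs_nonneg u.re
  have hy0 := abs_nonneg u.im
  set w : ℂ := ⟨|u.re|, |u.im|⟩
  have hfw : f w = f u := apply_abs_re_abs_im hneg hconj u
  have hw : w ∈ rect a b := ⟨⟨by linarith, hx⟩, by linarith, hy⟩
  by_cases hlow : b * |u.re| + a * |u.im| ≤ a * b
  · exact ⟨w, ⟨⟨hx0, hy0, hlow⟩, hw⟩, hfw⟩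
  · rw [not_le] at hlow
    have hre : (-w + (a + b * I)).re = a - |u.re| := by simp [w]; ring
    have him : (-w + (a + b * I)).im = b - |u.im| := by simp [w]; ring
    have hx1 : 0 < |u.re| := by nlinarith
    have hy1 : 0 < |u.im| := by nlinarith
    have hmem : -w + (a + b * I) ∈ rect a b := by
      rw [rect, Complex.mem_reProdIm, hre, him]
      exact ⟨⟨by linarith, by linarith⟩, by linarith, by linarith⟩
    refine ⟨-w + (a + b * I), ⟨?_, hmem⟩, by rw [hshift _ (neg_mem_rect hw) hmem, hneg, hfw]⟩
    rw [triangle, mem_ofPred_eq, hre, him]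
    exact ⟨by linarith, by linarith, by linarith⟩

lemma tendsto_top_vertex {f : ℂ → ℝ} (hneg : ∀ u, f (-u) = f u)
    (hshift : ∀ u ∈ rect a b, u + (a + b * I) ∈ rect a b → f (u + (a + b * I)) = f u)
    (hlim : Tendsto f (𝓝[rect a b] a) (𝓝 0)) :
    Tendsto f (𝓝[Ioo 0 a ×ℂ Ioo 0 b] (b * I)) (𝓝 0) := by
  have hmem : ∀ u ∈ Ioo 0 a ×ℂ Ioo 0 b, -u + (a + b * I) ∈ rect a b := fun u hu => by
    have hre : (-u + (a + b * I)).re = a - u.re := by simp; ring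
    have him : (-u + (a + b * I)).im = b - u.im := by simp; ring
    rw [rect, Complex.mem_reProdIm, hre, him]
    refine ⟨⟨?_, ?_⟩, ?_, ?_⟩ <;> linarith [hu.1.1, hu.1.2, hu.2.1, hu.2.2]
  have hflip : Tendsto (fun u : ℂ => -u + (a + b * I)) (𝓝[Ioo 0 a ×ℂ Ioo 0 b] (b * I))
      (𝓝[rect a b] a) := by
    refine tendsto_nhdsWithin_iff.2 ⟨?_, eventually_mem_nhdsWithin.mono hmem⟩
    have hcont : ContinuousAt (fun u : ℂ => -u + (a + b * I)) (b * I) := by fun_prop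
    have hval : -(b * I) + (a + b * I) = (a : ℂ) := by ring
    exact (hval ▸ hcont.tendsto).mono_left nhdsWithin_le_nhds
  refine (hlim.comp hflip).congr' (eventually_mem_nhdsWithin.mono fun u hu => ?_)
  have hu' : u ∈ rect a b := ⟨⟨by linarith [hu.1.1, hu.1.2], hu.1.2⟩,
    by linarith [hu.2.1, hu.2.2], hu.2.2⟩
  exact (hshift _ (neg_mem_rect hu') (hmem u hu)).trans (hneg u)

/-- Extended by `0` to the vertices, `f` is continuous on the compact triangle. -/
lemma exists_forall_le_of_tendsto_vertex (ha : 0 < a) (hb : 0 < b) {f : ℂ → ℝ}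
    (hf : ContinuousOn f (rect a b)) (hf0 : ∀ u, 0 ≤ f u) (hneg : ∀ u, f (-u) = f u)
    (hconj : ∀ u, f (conj u) = f u)
    (hshift : ∀ u ∈ rect a b, u + (a + b * I) ∈ rect a b → f (u + (a + b * I)) = f u)
    (hlim : Tendsto f (𝓝[rect a b] a) (𝓝 0)) : ∃ z ∈ rect a b, ∀ u ∈ rect a b, f u ≤ f z := by
  set Q := Ioo 0 a ×ℂ Ioo 0 b
  have hQ : Q ⊆ rect a b := fun u hu =>
    ⟨⟨by linarith [hu.1.1], hu.1.2⟩, by linarith [hu.2.1], hu.2.2⟩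
  have hTQ : triangle a b ⊆ closure Q := by
    rw [Complex.closure_reProdIm, closure_Ioo ha.ne, closure_Ioo hb.ne]
    exact triangle_subset ha hb
  have hrect : ∀ u ∈ rect a b, Tendsto f (𝓝[Q] u) (𝓝 (f u)) := fun u hu =>
    (hf.continuousAt ((isOpen_rect a b).mem_nhds hu)).tendsto.mono_left nhdsWithin_le_nhds
  have hright : Tendsto f (𝓝[Q] a) (𝓝 0) := hlim.mono_left (nhdsWithin_mono _ hQ)
  have htop := tendsto_top_vertex hneg hshift hlim
  have hcont : ContinuousOn (extendFrom Q f) (triangle a b) := by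
    refine continuousOn_extendFrom hTQ fun u hu => ?_
    rcases eq_vertex_or_mem_rect ha hb hu with rfl | rfl | hu
    exacts [⟨0, hright⟩, ⟨0, htop⟩, ⟨f u, hrect u hu⟩]
  have h0 : (0 : ℂ) ∈ triangle a b ∩ rect a b :=
    ⟨⟨le_rfl, le_rfl, by simpa using (mul_pos ha hb).le⟩, zero_mem_rect ha hb⟩
  have hext : ∀ u ∈ triangle a b ∩ rect a b, extendFrom Q f u = f u := fun u hu =>
    extendFrom_eq (hTQ hu.1) (hrect u hu.2)
  obtain ⟨z, hz, hmax⟩ := (isCompact_triangle ha hb).exists_isMaxOn ⟨0, h0.1⟩ hcont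
  have hle : ∀ u ∈ rect a b, f u ≤ extendFrom Q f z := fun u hu => by
    obtain ⟨v, hv, hvu⟩ := exists_mem_triangle_apply_eq hneg hconj hshift hu
    rw [← hvu, ← hext v hv]
    exact hmax hv.1
  rcases eq_vertex_or_mem_rect ha hb hz with rfl | rfl | hzr
  · rw [extendFrom_eq (hTQ hz) hright] at hle
    exact ⟨0, h0.2, fun u hu => (hle u hu).trans (hf0 0)⟩
  · rw [extendFrom_eq (hTQ hz) htop] at hle
    exact ⟨0, h0.2, fun u hu => (hle u hu).trans (hf0 0)⟩
  · exact ⟨z, hzr, by rwa [hext z ⟨hz, hzr⟩] at hle⟩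

lemma nhdsWithin_rect_neBot (ha : 0 < a) (hb : 0 < b) : (𝓝[rect a b] (a : ℂ)).NeBot := by
  rw [← mem_closure_iff_nhdsWithin_neBot, rect, Complex.closure_reProdIm,
    closure_Ioo (by linarith), closure_Ioo (by linarith)]
  exact ⟨⟨by simp; linarith, by simp⟩, by simpa using hb.le, by simpa using hb.le⟩

lemma eqOn_zero_of_norm_periodic (ha : 0 < a) (hb : 0 < b) {G : ℂ → ℂ}
    (hG : DifferentiableOn ℂ G (rect a b)) (hneg : ∀ u, ‖G (-u)‖ = ‖G u‖)
    (hconj : ∀ u, ‖G (conj u)‖ = ‖G u‖)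
    (hshift : ∀ u ∈ rect a b, u + (a + b * I) ∈ rect a b → ‖G (u + (a + b * I))‖ = ‖G u‖)
    (hlim : Tendsto G (𝓝[rect a b] a) (𝓝 0)) : EqOn G 0 (rect a b) := by
  obtain ⟨z, hz, hmax⟩ := exists_forall_le_of_tendsto_vertex ha hb (f := fun u => ‖G u‖)
    hG.continuousOn.norm (fun u => norm_nonneg _) hneg hconj hshift (by simpa using hlim.norm)
  have hconst := Complex.eqOn_of_isPreconnected_of_isMaxOn_norm (convex_rect a b).isPreconnected
    (isOpen_rect a b) hG hz hmax
  have := nhdsWithin_rect_neBot ha hb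
  have hGz : G z = 0 := tendsto_nhds_unique
    ((tendsto_const_nhds (x := G z)).congr' (hconst.symm.eventuallyEq_of_mem self_mem_nhdsWithin))
    hlim
  exact fun u hu => (hconst hu).trans hGz

end Liouville

/-! ### The differential equation -/

section ODE

variable {a b : ℝ} {u : ℂ}

/-- The parameter `B` of the differential equation `F'' = 2F³ + BF` satisfied by the generating
function, read off from its Laurent expansion at the pole `a`. -/
noncomputable def odeCoeff (a b : ℝ) : ℝ := 6 * (regPart a b 1 a).re

/-- The defect `F'' - 2F³ - BF` of the differential equation. -/
noncomputable def odeDefect (a b : ℝ) (u : ℂ) : ℂ :=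
  genFun a b 2 u - 2 * genFun a b 0 u ^ 3 - odeCoeff a b * genFun a b 0 u

lemma tendsto_odeDefect (ha : 0 < a) (hb : 0 < b) :
    Tendsto (odeDefect a b) (𝓝[rect a b] a) (𝓝 0) := by
  obtain ⟨p, hp, hcubic⟩ := exists_regPart_eq_cubic ha hb
  set r := regPart a b 1 a with hr
  have hB : (odeCoeff a b : ℂ) = 6 * r := by
    rw [odeCoeff, Complex.ofReal_mul, regPart, ofReal_re_mixedMoment]
    norm_num [hr, regPart]
  set E : ℂ → ℂ := fun v => regPart a b 2 (a + v) - 6 * v * p v + 6 * v * (r + v ^ 2 * p v) ^ 2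
    - 2 * v ^ 3 * (r + v ^ 2 * p v) ^ 3 - 6 * r * v * (r + v ^ 2 * p v) with hE
  have h0 := zero_mem_rect ha hb
  have hEcont : ContinuousAt E 0 := by
    have hp' := hp.continuousAt
    have hreg := (hasDerivAt_regPart_const_add ha hb 2 h0).continuousAt
    simp only [hE]
    fun_prop
  have hE0 : E 0 = 0 := by
    have htwo : regPart a b 2 a = 0 := regPart_even_self ha hb 1
    simp [hE, htwo]
  have hsub : Tendsto (fun u : ℂ => u - a) (𝓝[rect a b] a) (𝓝 0) := by
    have hcont : ContinuousAt (fun u : ℂ => u - a) a := by fun_prop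
    simpa using hcont.tendsto.mono_left nhdsWithin_le_nhds
  refine ((hE0 ▸ hEcont.tendsto).comp hsub).congr' (eventually_mem_nhdsWithin.mono fun u hu => ?_)
  obtain ⟨v, rfl⟩ : ∃ v, u = a + v := ⟨u - a, by ring⟩
  have hv : v ≠ 0 := fun h => sub_ne_zero_of_mem_rect hu (by simp [h])
  have hF : genFun a b 0 (a + v) = -1 / v + v * (r + v ^ 2 * p v) := by
    rw [genFun_const_add ha hb hu, hcubic]
    ring
  have hF2 : genFun a b 2 (a + v) = -2 / v ^ 3 + regPart a b 2 (a + v) := by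
    rw [genFun_eq_polarPart_add_regPart ha hb 2 hu]
    simp only [polarPart, sub_add_cancel_left, Nat.factorial_two, Nat.cast_ofNat, Nat.reduceAdd,
      Odd.neg_pow (by decide : Odd 3), div_neg, neg_div]
  simp only [odeDefect, hF, hF2, hB, hE, Function.comp_apply, add_sub_cancel_left]
  field_simp
  ring

lemma genFun_two_eq (ha : 0 < a) (hb : 0 < b) (hu : u ∈ rect a b) :
    genFun a b 2 u = 2 * genFun a b 0 u ^ 3 + odeCoeff a b * genFun a b 0 u := by
  have hzero : EqOn (odeDefect a b) 0 (rect a b) := by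
    refine eqOn_zero_of_norm_periodic ha hb (fun u hu => ?_) (fun u => ?_) (fun u => ?_)
      (fun u hu hu' => ?_) (tendsto_odeDefect ha hb)
    · have h0 := (hasDerivAt_genFun ha hb 0 hu).differentiableAt
      have h2 := (hasDerivAt_genFun ha hb 2 hu).differentiableAt
      exact ((h2.sub ((h0.pow 3).const_mul 2)).sub (h0.const_mul _)).differentiableWithinAt
    · rw [← norm_neg (odeDefect a b u), odeDefect, odeDefect, genFun_neg, genFun_neg]
      congr 1
      ring
    · rw [← RCLike.norm_conj (odeDefect a b u)]
      simp only [odeDefect, genFun, mixedMoment_conj, map_sub, map_mul, map_pow, map_ofNat,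
        Complex.conj_ofReal]
    · rw [← norm_neg (odeDefect a b u), odeDefect, odeDefect, genFun_add_antiperiod ha hb 0 hu hu',
        genFun_add_antiperiod ha hb 2 hu hu']
      congr 1
      ring
  have h : odeDefect a b u = 0 := hzero hu
  rw [odeDefect] at h
  linear_combination h

lemma genFun_one_sq (ha : 0 < a) (hb : 0 < b) (hu : u ∈ rect a b) :
    genFun a b 1 u ^ 2
      = genFun a b 0 u ^ 4 + odeCoeff a b * genFun a b 0 u ^ 2 + genFun a b 1 0 ^ 2 := by
  set energy : ℂ → ℂ := fun u =>
    genFun a b 1 u ^ 2 - genFun a b 0 u ^ 4 - odeCoeff a b * genFun a b 0 u ^ 2 with henergy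
  have hderiv : ∀ u ∈ rect a b, HasDerivAt energy 0 u := fun u hu => by
    have h0 := hasDerivAt_genFun ha hb 0 hu
    have h1 := hasDerivAt_genFun ha hb 1 hu
    refine (((h1.fun_pow 2).sub (h0.fun_pow 4)).sub ((h0.fun_pow 2).const_mul _)).congr_deriv ?_
    rw [genFun_two_eq ha hb hu]
    push_cast
    ring
  have h0 := zero_mem_rect ha hb
  have hconst : energy u = energy 0 := (isOpen_rect a b).is_const_of_deriv_eq_zero
    (convex_rect a b).isPreconnected
    (fun u hu => (hderiv u hu).differentiableAt.differentiableWithinAt)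
    (fun u hu => (hderiv u hu).deriv) hu h0
  simp only [henergy, genFun_zero_zero] at hconst
  linear_combination hconst

end ODE

/-! ### Blow-up times of first-order autonomous equations -/

section BlowUp

open Polynomial

/-- `φ` solves the autonomous equation `φ'² = Q(φ)` on `[x₀, a)`, starts with positive slope and
tends to infinity at `a`. -/
structure IsBlowUpSolution (Q : ℝ[X]) (φ φ' : ℝ → ℝ) (x₀ a : ℝ) : Prop where
  lt : x₀ < a
  hasDerivAt : ∀ x ∈ Ico x₀ a, HasDerivAt φ (φ' x) x
  continuousOn_deriv : ContinuousOn φ' (Ico x₀ a)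
  deriv_pos_left : 0 < φ' x₀
  deriv_sq : ∀ x ∈ Ico x₀ a, φ' x ^ 2 = Q.eval (φ x)
  tendsto_atTop : Tendsto φ (𝓝[<] a) atTop

lemma sub_C_sq_dvd_of_isLocalMin {Q : ℝ[X]} {t : ℝ} (hroot : Q.IsRoot t)
    (hmin : IsLocalMin (fun s => Q.eval s) t) : (X - C t) ^ 2 ∣ Q := by
  rcases eq_or_ne Q 0 with rfl | hQ
  · exact dvd_zero _
  · exact (le_rootMultiplicity_iff hQ).1 ((one_lt_rootMultiplicity_iff_isRoot hQ).2
      ⟨hroot, by simpa using hmin.deriv_eq_zero⟩)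

/-- Writing `Q = (X - t)² S` turns the equation into `|φ'| ≤ const · |φ - t|` on compact
intervals, so that Grönwall's inequality applies. -/
lemma eq_of_deriv_sq_eq_eval_of_double_root {Q : ℝ[X]} {φ φ' : ℝ → ℝ} {x₀ x₁ t : ℝ}
    (hφ : ∀ x ∈ Icc x₀ x₁, HasDerivAt φ (φ' x) x)
    (hode : ∀ x ∈ Icc x₀ x₁, φ' x ^ 2 = Q.eval (φ x)) (hdvd : (X - C t) ^ 2 ∣ Q)
    (ht : φ x₀ = t) : ∀ x ∈ Icc x₀ x₁, φ x = t := by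
  obtain ⟨S, rfl⟩ := hdvd
  have hφc : ContinuousOn φ (Icc x₀ x₁) := fun x hx => (hφ x hx).continuousAt.continuousWithinAt
  obtain ⟨M, hM⟩ := isCompact_Icc.exists_bound_of_continuousOn
    (S.continuous.comp_continuousOn hφc)
  have hbound : ∀ x ∈ Icc x₀ x₁, |φ' x| ≤ √M * |φ x - t| := fun x hx => by
    have hsq : φ' x ^ 2 = S.eval (φ x) * (φ x - t) ^ 2 := by
      rw [hode x hx, eval_mul, eval_pow, eval_sub, eval_X, eval_C, mul_comm]
    rw [← Real.sqrt_sq_eq_abs, ← Real.sqrt_sq_eq_abs (φ x - t),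
      ← Real.sqrt_mul ((norm_nonneg _).trans (hM x hx)), hsq]
    gcongr
    exact (le_abs_self _).trans (hM x hx)
  exact fun x hx => sub_eq_zero.1 <| eq_zero_of_abs_deriv_le_mul_abs_self_of_eq_zero_right
    (f := fun x => φ x - t) (hφc.sub continuousOn_const)
    (fun y hy => ((hφ y (Ico_subset_Icc_self hy)).sub_const t).hasDerivWithinAt)
    (sub_eq_zero.2 ht) (fun y hy => hbound y (Ico_subset_Icc_self hy)) x hx

namespace IsBlowUpSolution

variable {Q : ℝ[X]} {φ φ' : ℝ → ℝ} {x₀ a : ℝ}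

lemma continuousOn (h : IsBlowUpSolution Q φ φ' x₀ a) : ContinuousOn φ (Ico x₀ a) :=
  fun x hx => (h.hasDerivAt x hx).continuousAt.continuousWithinAt

lemma Ici_subset_image (h : IsBlowUpSolution Q φ φ' x₀ a) : Ici (φ x₀) ⊆ φ '' Ico x₀ a :=
  isPreconnected_Ico.intermediate_value_Ici (left_mem_Ico.2 h.lt)
    (le_principal_iff.2 (Ico_mem_nhdsLT h.lt)) h.continuousOn h.tendsto_atTop

/-- A zero of `Q` ahead of the starting value would be a double zero, since `Q(φ) = φ'² ≥ 0`; the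
solution could then never leave it. -/
lemma eval_pos (h : IsBlowUpSolution Q φ φ' x₀ a) {t : ℝ} (ht : φ x₀ ≤ t) : 0 < Q.eval t := by
  have hnonneg : ∀ s ∈ Ici (φ x₀), 0 ≤ Q.eval s := fun s hs => by
    obtain ⟨x, hx, rfl⟩ := h.Ici_subset_image hs
    exact h.deriv_sq x hx ▸ sq_nonneg _
  refine (hnonneg t ht).lt_of_ne' fun hroot => ?_
  have hstart : φ x₀ ≠ t := fun heq =>
    (pow_pos h.deriv_pos_left 2).ne' (by rw [h.deriv_sq x₀ (left_mem_Ico.2 h.lt), heq, hroot])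
  have hmin : IsLocalMin (fun s => Q.eval s) t := by
    filter_upwards [Ici_mem_nhds (ht.lt_of_ne hstart)] with s hs
    exact hroot.trans_le (hnonneg s hs)
  obtain ⟨x, hx, hxt⟩ := h.Ici_subset_image ht
  obtain ⟨y, hty, hy⟩ := ((h.tendsto_atTop.eventually_gt_atTop t).and (Ioo_mem_nhdsLT hx.2)).exists
  have hsub : Icc x y ⊆ Ico x₀ a := fun z hz => ⟨hx.1.trans hz.1, hz.2.trans_lt hy.2⟩
  exact hty.ne' (eq_of_deriv_sq_eq_eval_of_double_root (fun z hz => h.hasDerivAt z (hsub hz))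
    (fun z hz => h.deriv_sq z (hsub hz)) (sub_C_sq_dvd_of_isLocalMin hroot hmin) hxt y
    (right_mem_Icc.2 hy.1.le))

/-- Up to a first zero of `φ'` the solution would increase, so `Q(φ) > 0` there. -/
lemma deriv_pos (h : IsBlowUpSolution Q φ φ' x₀ a) : ∀ x ∈ Ico x₀ a, 0 < φ' x := by
  by_contra! hcon
  obtain ⟨x, hx, hx'⟩ := hcon
  have hsub : Icc x₀ x ⊆ Ico x₀ a := Icc_subset_Ico_right hx.2
  have hcompact : IsCompact (Icc x₀ x ∩ φ' ⁻¹' Iic 0) := isCompact_Icc.of_isClosed_subset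
    ((h.continuousOn_deriv.mono hsub).preimage_isClosed_of_isClosed isClosed_Icc isClosed_Iic)
    inter_subset_left
  obtain ⟨y, ⟨hy, hy'⟩, hleast⟩ := hcompact.exists_isLeast ⟨x, right_mem_Icc.2 hx.1, hx'⟩
  have hsuby : Icc x₀ y ⊆ Ico x₀ a := (Icc_subset_Icc_right hy.2).trans hsub
  have hzero : φ' y = 0 := by
    obtain ⟨z, hz, hz0⟩ := intermediate_value_Icc' hy.1 (h.continuousOn_deriv.mono hsuby)
      ⟨hy', h.deriv_pos_left.le⟩
    rwa [← hz.2.antisymm (hleast ⟨⟨hz.1, hz.2.trans hy.2⟩, hz0.le⟩)]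
  have hmono : MonotoneOn φ (Icc x₀ y) :=
    monotoneOn_of_hasDerivWithinAt_nonneg (convex_Icc _ _) (h.continuousOn.mono hsuby)
      (fun z hz => (h.hasDerivAt z (hsuby (interior_subset hz))).hasDerivWithinAt) fun z hz => by
        rw [interior_Icc] at hz
        by_contra! hneg
        exact hz.2.not_ge (hleast ⟨⟨hz.1.le, hz.2.le.trans hy.2⟩, hneg.le⟩)
  have hpos := h.eval_pos (hmono (left_mem_Icc.2 hy.1) (right_mem_Icc.2 hy.1) hy.1)
  rw [← h.deriv_sq y (hsuby (right_mem_Icc.2 hy.1)), hzero] at hpos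
  simp at hpos

lemma strictMonoOn (h : IsBlowUpSolution Q φ φ' x₀ a) : StrictMonoOn φ (Ico x₀ a) :=
  strictMonoOn_of_hasDerivWithinAt_pos (convex_Ico x₀ a) h.continuousOn
    (fun x hx => (h.hasDerivAt x (interior_subset hx)).hasDerivWithinAt)
    fun x hx => h.deriv_pos x (interior_subset hx)

lemma image_Ioo (h : IsBlowUpSolution Q φ φ' x₀ a) : φ '' Ioo x₀ a = Ioi (φ x₀) := by
  refine Subset.antisymm ?_ fun t ht => ?_
  · rintro _ ⟨x, hx, rfl⟩
    exact h.strictMonoOn (left_mem_Ico.2 h.lt) (Ioo_subset_Ico_self hx) hx.1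
  · obtain ⟨x, hx, rfl⟩ := h.Ici_subset_image (Ioi_subset_Ici_self ht)
    exact ⟨x, ⟨hx.1.lt_of_ne fun heq => (mem_Ioi.1 ht).ne (congrArg φ heq), hx.2⟩, rfl⟩

theorem sub_eq_integral (h : IsBlowUpSolution Q φ φ' x₀ a) :
    a - x₀ = ∫ t in Ioi (φ x₀), (√(Q.eval t))⁻¹ := by
  have hsub : Ioo x₀ a ⊆ Ico x₀ a := Ioo_subset_Ico_self
  have hone : ∀ x ∈ Ioo x₀ a, |φ' x| • (√(Q.eval (φ x)))⁻¹ = 1 := fun x hx => by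
    have hpos := h.deriv_pos x (hsub hx)
    rw [← h.deriv_sq x (hsub hx), Real.sqrt_sq hpos.le, abs_of_pos hpos, smul_eq_mul,
      mul_inv_cancel₀ hpos.ne']
  rw [← h.image_Ioo, integral_image_eq_integral_abs_deriv_smul measurableSet_Ioo
    (fun x hx => (h.hasDerivAt x (hsub hx)).hasDerivWithinAt) (h.strictMonoOn.injOn.mono hsub),
    setIntegral_congr_fun measurableSet_Ioo hone, setIntegral_const, measureReal_def,
    Real.volume_Ioo, ENNReal.toReal_ofReal (sub_pos.2 h.lt).le, smul_eq_mul, mul_one]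

end IsBlowUpSolution

end BlowUp

/-! ### Higher derivatives from the first integral -/

section DerivPoly

open Polynomial

/-- The quartic on the right of the first integral `F'² = F⁴ + B F² + A`. -/
noncomputable def quartic {R : Type*} [CommRing R] (A B : R) : R[X] := X ^ 4 + C B * X ^ 2 + C A

/-- The polynomial `p` with `F⁽²ᵐ⁾ = p(F)` for the solutions of `F'² = F⁴ + B F² + A`; the recursion
is `(p(F))'' = p''(F) F'² + p'(F) F''`. -/
noncomputable def derivPoly {R : Type*} [CommRing R] (A B : R) : ℕ → R[X]
  | 0 => X
  | m + 1 => derivative (derivative (derivPoly A B m)) * quartic A B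
      + derivative (derivPoly A B m) * (2 * X ^ 3 + C B * X)

lemma derivPoly_map {R S : Type*} [CommRing R] [CommRing S] (f : R →+* S) (A B : R) (m : ℕ) :
    (derivPoly A B m).map f = derivPoly (f A) (f B) m := by
  induction m with
  | zero => simp [derivPoly]
  | succ m ih => simp [derivPoly, quartic, ← ih, derivative_map]

lemma derivPoly_one {R : Type*} [CommRing R] (A B : R) :
    derivPoly A B 1 = 2 * X ^ 3 + C B * X := by
  simp [derivPoly]

lemma coeff_one_derivPoly_one {R : Type*} [CommRing R] (A B : R) :
    (derivPoly A B 1).coeff 1 = B := by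
  simp [derivPoly_one, coeff_X_pow]

lemma coeff_one_derivPoly_two {R : Type*} [CommRing R] (A B : R) :
    (derivPoly A B 2).coeff 1 = 12 * A + B ^ 2 := by
  have h : derivPoly A B 2 = 24 * X ^ 5 + 20 * (C B * X ^ 3) + (12 * C A + C (B ^ 2)) * X := by
    rw [derivPoly, derivPoly_one]
    simp [quartic, map_ofNat]
    ring
  simp [h, coeff_X_pow, add_mul, mul_assoc, -map_pow]

lemma setIntegral_pos_of_forall_pos {α : Type*} [MeasurableSpace α] {μ : Measure α} {s : Set α}
    {f : α → ℝ} (hs : MeasurableSet s) (hμ : μ s ≠ 0) (hf : IntegrableOn f s μ)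
    (hpos : ∀ x ∈ s, 0 < f x) : 0 < ∫ x in s, f x ∂μ := by
  have hnonneg : 0 ≤ᵐ[μ.restrict s] f := by
    filter_upwards [ae_restrict_mem hs] with x hx
    exact (hpos x hx).le
  rw [setIntegral_pos_iff_support_of_nonneg_ae hnonneg hf,
    inter_eq_right.2 fun x hx => Function.mem_support.2 (hpos x hx).ne']
  exact hμ.bot_lt

variable {a b : ℝ} {u : ℂ}

/-- The slope at the origin of the generating function. -/
noncomputable def slope (a b : ℝ) : ℝ := (genFun a b 1 0).re

lemma ofReal_slope (a b : ℝ) : (slope a b : ℂ) = genFun a b 1 0 := by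
  rw [slope, genFun]
  exact_mod_cast ofReal_re_mixedMoment (kernel b a) (kernel b a) (kernel a b) 1 0

lemma slope_comm (a b : ℝ) : slope a b = slope b a := by
  have h := genFun_I_mul a b 1 0
  rw [mul_zero, pow_one, mul_neg, Complex.I_mul_I, neg_neg, one_mul] at h
  rw [slope, h, slope]

lemma integral_mul_kernel_pos (p : ℝ) {q : ℝ} (hq : 0 < q) :
    0 < ∫ s in Ioi (0 : ℝ), s * kernel p q s := by
  have hpos : ∀ s ∈ Ioi (0 : ℝ), 0 < s * kernel p q s := fun s hs =>
    mul_pos hs (kernel_pos p hq.ne' s)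
  have hint : IntegrableOn (fun s : ℝ => s * kernel p q s) (Ioi 0) := by
    simpa [IntegrableOn] using ((hasExpDecay_kernel p hq).integrableOn 1 (u := 0) (by simpa)).re
  exact setIntegral_pos_of_forall_pos measurableSet_Ioi (by simp) hint hpos

lemma slope_pos (ha : 0 < a) (hb : 0 < b) : 0 < slope a b := by
  have h := genFun_odd_zero a b 0
  rw [slope, h, Complex.ofReal_re]
  simpa using add_pos (integral_mul_kernel_pos a hb) (integral_mul_kernel_pos b ha)

/-- The quartic of the first integral of the generating function. -/
noncomputable def firstIntegral (a b : ℝ) : ℝ[X] := quartic (slope a b ^ 2) (odeCoeff a b)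

lemma genFun_one_sq_eq_aeval (ha : 0 < a) (hb : 0 < b) (hu : u ∈ rect a b) :
    genFun a b 1 u ^ 2 = aeval (genFun a b 0 u) (firstIntegral a b) := by
  simp [genFun_one_sq ha hb hu, firstIntegral, quartic, ofReal_slope]

lemma genFun_succ_eq_of_eq_aeval (ha : 0 < a) (hb : 0 < b) {n : ℕ} {p : ℝ[X]}
    (h : ∀ u ∈ rect a b, genFun a b n u = aeval (genFun a b 0 u) p) (hu : u ∈ rect a b) :
    genFun a b (n + 1) u = aeval (genFun a b 0 u) (derivative p) * genFun a b 1 u :=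
  (hasDerivAt_genFun ha hb n hu).unique <|
    ((p.hasDerivAt_aeval (genFun a b 0 u)).comp u (hasDerivAt_genFun ha hb 0 hu))
      |>.congr_of_eventuallyEq (eventually_of_mem ((isOpen_rect a b).mem_nhds hu) h)

lemma genFun_two_mul_eq_aeval (ha : 0 < a) (hb : 0 < b) (m : ℕ) (hu : u ∈ rect a b) :
    genFun a b (2 * m) u
      = aeval (genFun a b 0 u) (derivPoly (slope a b ^ 2) (odeCoeff a b) m) := by
  induction m generalizing u with
  | zero => simp [derivPoly]
  | succ m ih =>
    set p := derivPoly (slope a b ^ 2) (odeCoeff a b) m with hp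
    have hodd : EqOn (genFun a b (2 * m + 1))
        (fun u => aeval (genFun a b 0 u) (derivative p) * genFun a b 1 u) (rect a b) :=
      fun v hv => genFun_succ_eq_of_eq_aeval ha hb (fun _ => ih) hv
    have hderiv := (((derivative p).hasDerivAt_aeval (genFun a b 0 u)).comp u
      (hasDerivAt_genFun ha hb 0 hu)).mul (hasDerivAt_genFun ha hb 1 hu)
    calc genFun a b (2 * (m + 1)) u
        = aeval (genFun a b 0 u) (derivative (derivative p)) * genFun a b 1 u ^ 2
          + aeval (genFun a b 0 u) (derivative p) * genFun a b 2 u := by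
          refine ((hasDerivAt_genFun ha hb (2 * m + 1) hu).unique (hderiv.congr_of_eventuallyEq
            (hodd.eventuallyEq_of_mem ((isOpen_rect a b).mem_nhds hu)))).trans ?_
          simp only [Function.comp_apply, zero_add]
          ring
      _ = aeval (genFun a b 0 u) (derivPoly (slope a b ^ 2) (odeCoeff a b) (m + 1)) := by
          rw [genFun_one_sq_eq_aeval ha hb hu, genFun_two_eq ha hb hu, derivPoly, ← hp]
          simp [firstIntegral, map_ofNat]

lemma genFun_odd_zero_eq_coeff (ha : 0 < a) (hb : 0 < b) (m : ℕ) :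
    genFun a b (2 * m + 1) 0
      = ((derivPoly (slope a b ^ 2) (odeCoeff a b) m).coeff 1 * slope a b : ℝ) := by
  rw [genFun_succ_eq_of_eq_aeval ha hb (fun u hu => genFun_two_mul_eq_aeval ha hb m hu)
    (zero_mem_rect ha hb), genFun_zero_zero, ← ofReal_slope, ← coeff_zero_eq_aeval_zero',
    coeff_derivative]
  simp

/-- The rotation `u ↦ iu` exchanges `a` and `b` and changes the sign of the third derivative. -/
lemma odeCoeff_swap (ha : 0 < a) (hb : 0 < b) : odeCoeff b a = -odeCoeff a b := by
  have h := genFun_I_mul a b 3 0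
  have hI : I * (-I) ^ 3 = -1 := by
    linear_combination (1 - I ^ 2) * Complex.I_sq
  rw [mul_zero, hI, genFun_odd_zero_eq_coeff ha hb 1, genFun_odd_zero_eq_coeff hb ha 1,
    coeff_one_derivPoly_one, coeff_one_derivPoly_one, slope_comm b a] at h
  have h' : odeCoeff a b * slope a b = -odeCoeff b a * slope a b := by
    rw [neg_mul]
    exact_mod_cast h.trans (neg_one_mul _)
  rw [mul_right_cancel₀ (slope_pos ha hb).ne' h', neg_neg]

end DerivPoly

/-! ### The half-periods as elliptic integrals -/

section QuarticInt

open Polynomial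

/-- The elliptic integral `∫₀^∞ dt / √(t⁴ + B t² + A)`. -/
noncomputable def quarticInt (A B : ℝ) : ℝ := ∫ t in Ioi (0 : ℝ), (√((quartic A B).eval t))⁻¹

lemma eval_quartic (A B t : ℝ) : (quartic A B).eval t = t ^ 4 + B * t ^ 2 + A := by
  simp [quartic]

variable {a b : ℝ}

lemma tendsto_re_genFun_atTop (ha : 0 < a) (hb : 0 < b) :
    Tendsto (fun x : ℝ => (genFun a b 0 x).re) (𝓝[<] a) atTop := by
  have hsplit : ∀ᶠ x : ℝ in 𝓝[<] a, (a - x)⁻¹ + (regPart a b 0 x).re = (genFun a b 0 x).re := by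
    filter_upwards [Ioo_mem_nhdsLT ha] with x hx
    have hmem : (a : ℂ) + (x - a : ℝ) ∈ rect a b := by
      simpa using ofReal_mem_rect (abs_lt.2 ⟨by linarith [hx.1], hx.2⟩) hb
    have h := genFun_const_add ha hb hmem
    rw [Complex.ofReal_sub, add_sub_cancel] at h
    rw [h, ← Complex.ofReal_sub, one_div, ← Complex.ofReal_inv, Complex.sub_re, Complex.ofReal_re,
      ← neg_sub x a, inv_neg]
    ring
  have hreg : ContinuousAt (fun x : ℝ => (regPart a b 0 x).re) a :=
    (hasDerivAt_regPart ha hb 0 (u := (a : ℂ))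
      (by simp [Complex.mem_reProdIm, ha, hb])).real_of_complex.continuousAt
  have hpole : Tendsto (fun x : ℝ => (a - x)⁻¹) (𝓝[<] a) atTop := by
    refine tendsto_inv_nhdsGT_zero.comp (tendsto_nhdsWithin_iff.2 ⟨?_, ?_⟩)
    · exact (Continuous.tendsto' (by fun_prop) a 0 (sub_self a)).mono_left nhdsWithin_le_nhds
    · filter_upwards [self_mem_nhdsWithin] with x hx
      exact sub_pos.2 (mem_Iio.1 hx)
  exact (hpole.atTop_add (hreg.tendsto.mono_left nhdsWithin_le_nhds)).congr' hsplit

lemma isBlowUpSolution_re_genFun (ha : 0 < a) (hb : 0 < b) :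
    IsBlowUpSolution (firstIntegral a b) (fun x : ℝ => (genFun a b 0 x).re)
      (fun x : ℝ => (genFun a b 1 x).re) 0 a := by
  have hmem : ∀ x ∈ Ico 0 a, (x : ℂ) ∈ rect a b := fun x hx =>
    ofReal_mem_rect (by rw [abs_of_nonneg hx.1]; exact hx.2) hb
  have hderiv : ∀ n, ∀ x ∈ Ico 0 a,
      HasDerivAt (fun x : ℝ => (genFun a b n x).re) (genFun a b (n + 1) x).re x := fun n x hx =>
    (hasDerivAt_genFun ha hb n (hmem x hx)).real_of_complex
  refine ⟨ha, hderiv 0, fun x hx => (hderiv 1 x hx).continuousAt.continuousWithinAt, ?_,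
    fun x hx => ?_, tendsto_re_genFun_atTop ha hb⟩
  · exact (slope_pos ha hb).trans_eq (by rw [slope, Complex.ofReal_zero])
  · have h := genFun_one_sq_eq_aeval ha hb (hmem x hx)
    have hreal : ∀ n, ((genFun a b n x).re : ℂ) = genFun a b n x :=
      fun n => ofReal_re_mixedMoment _ _ _ n x
    rw [← hreal 0, ← hreal 1, ← Complex.coe_algebraMap, aeval_algebraMap_apply,
      coe_aeval_eq_eval] at h
    exact_mod_cast h

lemma firstIntegral_eval_pos (ha : 0 < a) (hb : 0 < b) (t : ℝ) :
    0 < (firstIntegral a b).eval t := by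
  have h := (isBlowUpSolution_re_genFun ha hb).eval_pos (t := |t|)
    (by simp [genFun_zero_zero])
  simpa only [firstIntegral, eval_quartic, sq_abs, (by decide : Even 4).pow_abs] using h

lemma quarticInt_slope_sq_odeCoeff (ha : 0 < a) (hb : 0 < b) :
    quarticInt (slope a b ^ 2) (odeCoeff a b) = a := by
  have h := (isBlowUpSolution_re_genFun ha hb).sub_eq_integral
  rw [Complex.ofReal_zero, genFun_zero_zero, Complex.zero_re, sub_zero] at h
  exact h.symm

/-! ### Identification with the complete elliptic integrals -/

lemma integrableOn_of_quarticInt_ne_zero {A B : ℝ} (h : quarticInt A B ≠ 0) :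
    IntegrableOn (fun t => (√((quartic A B).eval t))⁻¹) (Ioi 0) :=
  not_imp_comm.1 integral_undef h

lemma quarticInt_lt {A B A' B' : ℝ} (hA : A ≤ A') (hB : B ≤ B') (hne : A ≠ A' ∨ B ≠ B')
    (hpos : ∀ t, 0 < (quartic A B).eval t) (h : quarticInt A B ≠ 0) (h' : quarticInt A' B' ≠ 0) :
    quarticInt A' B' < quarticInt A B := by
  have hint := integrableOn_of_quarticInt_ne_zero h
  have hint' := integrableOn_of_quarticInt_ne_zero h'
  have hlt : ∀ t ∈ Ioi (0 : ℝ), (quartic A B).eval t < (quartic A' B').eval t := fun t ht => by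
    have ht2 : 0 < t ^ 2 := pow_pos ht 2
    rw [eval_quartic, eval_quartic]
    rcases hne with hA' | hB'
    · nlinarith [hA.lt_of_ne hA']
    · nlinarith [hB.lt_of_ne hB']
  rw [← sub_pos, quarticInt, quarticInt, ← integral_sub hint hint']
  exact setIntegral_pos_of_forall_pos measurableSet_Ioi (by simp) (hint.sub hint') fun t ht =>
    sub_pos.2 (inv_strictAnti₀ (Real.sqrt_pos.2 (hpos t))
      (Real.sqrt_lt_sqrt (hpos t).le (hlt t ht)))

/-- Of the two pairs `(A, B)`, `(A', B')` and `(A, -B)`, `(A', -B')` one is ordered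
componentwise. -/
lemma quarticInt_injective {A B A' B' : ℝ} (hpos : ∀ t, 0 < (quartic A B).eval t)
    (hpos_neg : ∀ t, 0 < (quartic A (-B)).eval t) (hpos' : ∀ t, 0 < (quartic A' B').eval t)
    (hpos_neg' : ∀ t, 0 < (quartic A' (-B')).eval t)
    (h : quarticInt A B = quarticInt A' B') (h_neg : quarticInt A (-B) = quarticInt A' (-B'))
    (h0 : quarticInt A B ≠ 0) (h0_neg : quarticInt A (-B) ≠ 0) : A = A' ∧ B = B' := by
  by_contra hcon
  have hne : A ≠ A' ∨ B ≠ B' := not_and_or.1 hcon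
  have hne' : A' ≠ A ∨ B' ≠ B := hne.imp Ne.symm Ne.symm
  rcases le_total A A' with hA | hA <;> rcases le_total B B' with hB | hB
  · exact (quarticInt_lt hA hB hne hpos h0 (h ▸ h0)).ne' h
  · exact (quarticInt_lt hA (neg_le_neg hB) (by simpa using hne) hpos_neg h0_neg
      (h_neg ▸ h0_neg)).ne' h_neg
  · exact (quarticInt_lt hA (neg_le_neg hB) (by simpa using hne') hpos_neg' (h_neg ▸ h0_neg)
      h0_neg).ne h_neg
  · exact (quarticInt_lt hA hB hne' hpos' (h ▸ h0) h0).ne h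

end QuarticInt

section EllipticK

variable {k : ℝ}

lemma one_sub_mul_sin_sq_pos (hk : |k| < 1) (θ : ℝ) : 0 < 1 - k ^ 2 * Real.sin θ ^ 2 := by
  nlinarith [(sq_lt_one_iff_abs_lt_one k).2 hk, Real.sin_sq_le_one θ, sq_nonneg (Real.sin θ)]

lemma continuous_ellipticK_integrand (hk : |k| < 1) :
    Continuous fun θ : ℝ => (1 - k ^ 2 * Real.sin θ ^ 2) ^ (-(1 / 2) : ℝ) :=
  Continuous.rpow_const (by fun_prop) fun θ => Or.inl (one_sub_mul_sin_sq_pos hk θ).ne'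

lemma ellipticK_pos (hk : |k| < 1) : 0 < ellipticK k :=
  intervalIntegral.intervalIntegral_pos_of_pos
    ((continuous_ellipticK_integrand hk).intervalIntegrable _ _)
    (fun θ => Real.rpow_pos_of_pos (one_sub_mul_sin_sq_pos hk θ) _) (by positivity)

lemma abs_sqrt_one_sub_sq_lt_one (hk : k ≠ 0) : |√(1 - k ^ 2)| < 1 := by
  rw [abs_of_nonneg (Real.sqrt_nonneg _), Real.sqrt_lt' one_pos]
  linarith [sq_pos_of_ne_zero hk]

lemma image_tan_Ioo : Real.tan '' Ioo 0 (π / 2) = Ioi 0 := by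
  refine Subset.antisymm ?_ fun t ht =>
    ⟨Real.arctan t, ⟨Real.arctan_pos.2 ht, Real.arctan_lt_pi_div_two t⟩, Real.tan_arctan t⟩
  rintro _ ⟨x, hx, rfl⟩
  exact Real.tan_pos_of_pos_of_lt_pi_div_two hx.1 hx.2

/-- The graph of the integrand is symmetric about `π / 2`. -/
lemma ellipticK_eq_integral_two_mul (hk : |k| < 1) :
    ellipticK k = ∫ x in (0 : ℝ)..(π / 2), (1 - k ^ 2 * Real.sin (2 * x) ^ 2) ^ (-(1 / 2) : ℝ) := by
  set f : ℝ → ℝ := fun θ => (1 - k ^ 2 * Real.sin θ ^ 2) ^ (-(1 / 2) : ℝ) with hf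
  have hint := (continuous_ellipticK_integrand hk).intervalIntegrable (μ := volume)
  have hdouble : ∫ x in (0 : ℝ)..(π / 2), f (2 * x) = 2⁻¹ * ∫ x in (0 : ℝ)..π, f x := by
    rw [intervalIntegral.integral_comp_mul_left f two_ne_zero, smul_eq_mul, mul_zero,
      mul_div_cancel₀ _ two_ne_zero]
  have hreflect : ∫ x in (π / 2)..π, f x = ∫ x in (0 : ℝ)..(π / 2), f x := by
    have h := intervalIntegral.integral_comp_sub_left (a := 0) (b := π / 2) f π
    rw [sub_zero, sub_half] at h
    rw [← h]
    simp only [hf, Real.sin_pi_sub]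
  rw [hdouble, ← intervalIntegral.integral_add_adjacent_intervals (hint 0 (π / 2)) (hint (π / 2) π),
    hreflect, ellipticK]
  ring

lemma eval_quartic_tan (k : ℝ) {x : ℝ} (hx : Real.cos x ≠ 0) :
    (quartic 1 (2 * (1 - 2 * k ^ 2))).eval (Real.tan x)
      = (1 - k ^ 2 * Real.sin (2 * x) ^ 2) * (1 / Real.cos x ^ 2) ^ 2 := by
  rw [eval_quartic, Real.tan_eq_sin_div_cos, Real.sin_two_mul]
  field_simp
  linear_combination (Real.sin x ^ 2 + Real.cos x ^ 2 + 1) * Real.sin_sq_add_cos_sq x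

/-- The substitution `t = tan (θ / 2)`. -/
lemma quarticInt_eq_ellipticK (hk : |k| < 1) :
    quarticInt 1 (2 * (1 - 2 * k ^ 2)) = ellipticK k := by
  have hcos : ∀ x ∈ Ioo 0 (π / 2), 0 < Real.cos x := fun x hx =>
    Real.cos_pos_of_mem_Ioo ⟨by linarith [hx.1, Real.pi_pos], hx.2⟩
  rw [ellipticK_eq_integral_two_mul hk, quarticInt, ← image_tan_Ioo,
    integral_image_eq_integral_abs_deriv_smul measurableSet_Ioo
      (fun x hx => (Real.hasDerivAt_tan (hcos x hx).ne').hasDerivWithinAt)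
      (Real.injOn_tan.mono (Ioo_subset_Ioo_left (by linarith [Real.pi_pos]))),
    intervalIntegral.integral_of_le (by positivity), integral_Ioc_eq_integral_Ioo]
  refine setIntegral_congr_fun measurableSet_Ioo fun x hx => ?_
  have hpos := one_sub_mul_sin_sq_pos hk (2 * x)
  have hinv : 0 < 1 / Real.cos x ^ 2 := one_div_pos.2 (pow_pos (hcos x hx) 2)
  rw [eval_quartic_tan k (hcos x hx).ne', Real.sqrt_mul hpos.le, Real.sqrt_sq hinv.le,
    abs_of_pos hinv, Real.rpow_neg hpos.le, ← Real.sqrt_eq_rpow, smul_eq_mul, mul_inv,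
    mul_left_comm, mul_inv_cancel₀ hinv.ne', mul_one]

lemma eval_quartic_one_pos {B : ℝ} (hB : |B| < 2) (t : ℝ) : 0 < (quartic 1 B).eval t := by
  rw [abs_lt] at hB
  rw [eval_quartic]
  nlinarith [sq_nonneg (t ^ 2 + B / 2)]

/-- The half-periods `K` and `K'` are those of the quartic `t⁴ + 2(1 - 2k²)t² + 1`, and they
determine the quartic. -/
lemma slope_eq_one_and_odeCoeff_eq (hk : k ∈ Ioo (0 : ℝ) 1) :
    slope (ellipticK k) (ellipticK (√(1 - k ^ 2))) = 1 ∧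
      odeCoeff (ellipticK k) (ellipticK (√(1 - k ^ 2))) = 2 * (1 - 2 * k ^ 2) := by
  have hk_abs : |k| < 1 := (abs_of_pos hk.1).trans_lt hk.2
  have hk'_abs := abs_sqrt_one_sub_sq_lt_one hk.1.ne'
  have hk_sq : k ^ 2 < 1 := (sq_lt_one_iff_abs_lt_one k).2 hk_abs
  have hk_pos : 0 < k ^ 2 := pow_pos hk.1 2
  have hk'_sq : √(1 - k ^ 2) ^ 2 = 1 - k ^ 2 := Real.sq_sqrt (by linarith)
  have ha := ellipticK_pos hk_abs
  have hb := ellipticK_pos hk'_abs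
  have hB : |2 * (1 - 2 * k ^ 2)| < 2 := abs_lt.2 ⟨by linarith, by linarith⟩
  have hK := quarticInt_eq_ellipticK hk_abs
  have hK' := quarticInt_eq_ellipticK hk'_abs
  rw [hk'_sq, show 2 * (1 - 2 * (1 - k ^ 2)) = -(2 * (1 - 2 * k ^ 2)) by ring] at hK'
  set a := ellipticK k
  set b := ellipticK (√(1 - k ^ 2))
  have hpos_neg := firstIntegral_eval_pos hb ha
  have h_neg := quarticInt_slope_sq_odeCoeff hb ha
  rw [slope_comm, odeCoeff_swap ha hb] at h_neg
  rw [firstIntegral, slope_comm, odeCoeff_swap ha hb] at hpos_neg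
  have h := quarticInt_slope_sq_odeCoeff ha hb
  obtain ⟨hslope, hcoeff⟩ := quarticInt_injective (firstIntegral_eval_pos ha hb) hpos_neg
    (eval_quartic_one_pos hB) (eval_quartic_one_pos (by rwa [abs_neg])) (h.trans hK.symm)
    (h_neg.trans hK'.symm) (h.trans_ne ha.ne') (h_neg.trans_ne hb.ne')
  exact ⟨(pow_eq_one_iff_of_nonneg (slope_pos ha hb).le two_ne_zero).1 hslope, hcoeff⟩

lemma integral_pow_div_cos_add_cosh (p q : ℝ) (n : ℕ) :
    (∫ x in Ioi (0 : ℝ), x ^ n / (Real.cos (p * √x) + Real.cosh (q * √x)))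
      = 2 * ∫ s in Ioi (0 : ℝ), s ^ (2 * n + 1) * kernel p q s := by
  rw [← integral_comp_rpow_Ioi_of_pos (p := 2) two_pos, ← integral_const_mul]
  refine setIntegral_congr_fun measurableSet_Ioi fun s hs => ?_
  have hexp : (2 : ℝ) - 1 = 1 := by norm_num
  simp only [smul_eq_mul, Real.rpow_two, kernel]
  rw [Real.sqrt_sq (le_of_lt hs), hexp, Real.rpow_one, div_eq_mul_inv]
  ring

lemma ofReal_Iplus (k : ℝ) (n : ℕ) :
    (Iplus k n : ℂ)
      = (-1) ^ n * genFun (ellipticK k) (ellipticK (√(1 - k ^ 2))) (2 * n + 1) 0 := by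
  have hsign : ((-1 : ℂ) ^ n) * (-1) ^ n = 1 := by rw [← mul_pow]; simp
  simp only [Iplus, genFun_odd_zero, add_comm (Real.cosh _), integral_pow_div_cos_add_cosh]
  push_cast
  linear_combination -((∫ s in Ioi (0 : ℝ), s ^ (2 * n + 1)
    * kernel (ellipticK k) (ellipticK (√(1 - k ^ 2))) s : ℝ) : ℂ) * hsign

theorem Iplus_eq_coeff_derivPoly (hk : k ∈ Ioo (0 : ℝ) 1) (n : ℕ) :
    Iplus k n = (-1) ^ n * (derivPoly 1 (2 * (1 - 2 * k ^ 2)) n).coeff 1 := by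
  have hk_abs : |k| < 1 := (abs_of_pos hk.1).trans_lt hk.2
  have hk'_abs := abs_sqrt_one_sub_sq_lt_one hk.1.ne'
  obtain ⟨hslope, hcoeff⟩ := slope_eq_one_and_odeCoeff_eq hk
  have h := ofReal_Iplus k n
  rw [genFun_odd_zero_eq_coeff (ellipticK_pos hk_abs) (ellipticK_pos hk'_abs), hslope, hcoeff,
    one_pow, mul_one] at h
  exact_mod_cast h

end EllipticK

end Kuznetsov

theorem Iplus_values_and_rationality (k : ℝ) (hk : k ∈ Set.Ioo (0 : ℝ) 1) :
    Iplus k 1 = -2 * (1 - 2 * k ^ 2) ∧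
    Iplus k 2 = 16 * (1 - k ^ 2 + k ^ 4) ∧
    ((∃ r : ℚ, (r : ℝ) = k ^ 2) → ∀ n : ℕ, ∃ r : ℚ, (r : ℝ) = Iplus k n) := by
  refine ⟨?_, ?_, ?_⟩
  · rw [Kuznetsov.Iplus_eq_coeff_derivPoly hk, Kuznetsov.coeff_one_derivPoly_one]
    ring
  · rw [Kuznetsov.Iplus_eq_coeff_derivPoly hk, Kuznetsov.coeff_one_derivPoly_two]
    ring
  · rintro ⟨r, hr⟩ n
    have hmap : (Kuznetsov.derivPoly 1 (2 * (1 - 2 * k ^ 2)) n)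
        = (Kuznetsov.derivPoly 1 (2 * (1 - 2 * r)) n).map (Rat.castHom ℝ) := by
      simp [Kuznetsov.derivPoly_map, hr]
    refine ⟨(-1) ^ n * (Kuznetsov.derivPoly 1 (2 * (1 - 2 * r)) n).coeff 1, ?_⟩
    simp [Kuznetsov.Iplus_eq_coeff_derivPoly hk, hmap]
end

section
/- Let k ∈ (0,1) and let p ≥ 1 be an integer. Then Kuznetsov's moment integral I_{p−1}^+ has the Lambert series representation I_{p−1}^+ = (π/K)^{2p} (−(1/2)E_{2p−1}(0) + 2 Σ_{n≥1} n^{2p−1} q^n/(1 + (−q)^n)), where q = e^{−πK'/K}. -/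
/-!
With `β = K'` and `γ = K`, the substitution `x = y²` turns `Iplus` into the moments of order
`m = 2p - 1` of `1 / (cosh βy + cos γy)` and `1 / (cosh γy + cos βy)`. Both come from the Laplace
transforms `m! / s ^ (2p)` of `y ^ m` at the points `s = (u + 1)β + vγi`, where `u ≥ 0` and
`v ≡ u` mod 2, summed over `v` and then over `u` with the sign `(-1) ^ u`.

For fixed `u`, Lipschitz's formula turns the sum over `v` into a power series in
`(-1) ^ u * q ^ (u + 1)`; summing these over `u` produces the Lambert series. On the other hand,
expanding the first kernel in exponentials shows that the points with `|v| ≤ u` account for half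
the first moment. The points with `|v| > u`, rotated by `±i` into the right half-plane, account in
the same way for half the difference of `∫ y ^ m / sinh γy` and the second moment, up to the sign
`(-1) ^ p`. Expanding `1 / sinh` reduces the last integral to Euler's value of `ζ(2p)`, hence to a
Bernoulli number.

For `p = 1` the sum over all points is not absolutely convergent. The sums over `u` are therefore
taken under the integral signs, where the partial sums are closed forms with an integrable
majorant.
-/

open MeasureTheory Real

namespace KuznetsovMoment

open Filter Topology Set
open scoped Nat

section AlternatingSums

lemma sum_neg_one_pow_mul_pow_succ {F : Type*} [Field F] {z : F} (hz : 1 + z ≠ 0) (N : ℕ) :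
    ∑ u ∈ Finset.range N, (-1) ^ u * z ^ (u + 1) = z / (1 + z) * (1 - (-z) ^ N) := by
  induction N with
  | zero => simp
  | succ N ih =>
    rw [Finset.sum_range_succ, ih]
    field_simp
    ring

lemma one_add_mul_one_add_mul_sum_geom_sum₂ {R : Type*} [CommRing R] (z w : R) (N : ℕ) :
    (1 + z) * (1 + w) *
        ∑ u ∈ Finset.range N, (-1) ^ u * ∑ i ∈ Finset.range (u + 1), z ^ i * w ^ (u - i) =
      1 + (-1) ^ N * (z ^ (N + 1) - (1 + z) * ∑ i ∈ Finset.range (N + 1), z ^ i * w ^ (N - i)) := by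
  induction N with
  | zero => simp
  | succ N ih =>
    have hsucc := geom_sum₂_succ_eq z w (n := N + 1)
    rw [Nat.add_sub_cancel] at hsucc
    rw [Finset.sum_range_succ, mul_add, ih, hsucc]
    ring

variable {F : Type*} [NormedField F] {z w : F} {r : ℝ}

lemma norm_geom_sum₂_le (hz : ‖z‖ ≤ r) (hw : ‖w‖ ≤ r) (N : ℕ) :
    ‖∑ i ∈ Finset.range (N + 1), z ^ i * w ^ (N - i)‖ ≤ (N + 1) * r ^ N := by
  have hterm : ∀ i ∈ Finset.range (N + 1), ‖z ^ i * w ^ (N - i)‖ ≤ r ^ N := by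
    intro i hi
    rw [norm_mul, norm_pow, norm_pow, ← pow_mul_pow_sub r (Finset.mem_range_succ_iff.1 hi)]
    gcongr
    exact pow_nonneg ((norm_nonneg z).trans hz) _
  simpa using norm_sum_le_of_le _ hterm

lemma norm_one_add_mul_sum_geom_sum₂_le (hz : ‖z‖ ≤ r) (hw : ‖w‖ ≤ r) (hr : r ≤ 1) (N : ℕ) :
    ‖(1 + z) * (1 + w) *
        ∑ u ∈ Finset.range N, (-1) ^ u * ∑ i ∈ Finset.range (u + 1), z ^ i * w ^ (u - i)‖ ≤
      2 + 2 * ((N + 1) * r ^ N) := by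
  have hz1 : ‖z‖ ≤ 1 := hz.trans hr
  rw [one_add_mul_one_add_mul_sum_geom_sum₂]
  set T := ∑ i ∈ Finset.range (N + 1), z ^ i * w ^ (N - i)
  calc ‖1 + (-1) ^ N * (z ^ (N + 1) - (1 + z) * T)‖
      ≤ 1 + (‖z‖ ^ (N + 1) + (1 + ‖z‖) * ‖T‖) := by
        refine (norm_add_le _ _).trans ?_
        rw [norm_mul, norm_pow, norm_neg, norm_one, one_pow, one_mul]
        gcongr
        refine (norm_sub_le _ _).trans ?_
        rw [norm_pow, norm_mul]
        gcongr
        simpa using norm_add_le 1 z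
    _ ≤ 1 + (1 + (1 + 1) * ((N + 1) * r ^ N)) := by
        gcongr
        · exact pow_le_one₀ (norm_nonneg z) hz1
        · exact norm_geom_sum₂_le hz hw N
    _ = 2 + 2 * ((N + 1) * r ^ N) := by ring

lemma tendsto_one_add_mul_sum_geom_sum₂ (hz : ‖z‖ ≤ r) (hw : ‖w‖ ≤ r) (hr : r < 1) :
    Tendsto (fun N : ℕ ↦ (1 + z) * (1 + w) *
      ∑ u ∈ Finset.range N, (-1) ^ u * ∑ i ∈ Finset.range (u + 1), z ^ i * w ^ (u - i))
      atTop (𝓝 1) := by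
  have hr0 : 0 ≤ r := (norm_nonneg z).trans hz
  have hpow : Tendsto (fun N : ℕ ↦ z ^ (N + 1)) atTop (𝓝 0) :=
    (tendsto_pow_atTop_nhds_zero_of_norm_lt_one (hz.trans_lt hr)).comp (tendsto_add_atTop_nat 1)
  have hgeom : Tendsto (fun N : ℕ ↦ ∑ i ∈ Finset.range (N + 1), z ^ i * w ^ (N - i))
      atTop (𝓝 0) := by
    refine squeeze_zero_norm (norm_geom_sum₂_le hz hw) ?_
    simpa only [add_mul, one_mul, add_zero] using
      (tendsto_self_mul_const_pow_of_lt_one hr0 hr).add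
        (tendsto_pow_atTop_nhds_zero_of_lt_one hr0 hr)
  have hrem : Tendsto (fun N : ℕ ↦ (-1) ^ N *
      (z ^ (N + 1) - (1 + z) * ∑ i ∈ Finset.range (N + 1), z ^ i * w ^ (N - i))) atTop (𝓝 0) := by
    rw [tendsto_zero_iff_norm_tendsto_zero]
    simpa using (hpow.sub (hgeom.const_mul (1 + z))).norm
  simpa only [one_add_mul_one_add_mul_sum_geom_sum₂, add_zero] using hrem.const_add 1

end AlternatingSums

section Kernel

/-- The function `1 / (cosh βx + cos γx)`; after `x = y²` the integrands of `Iplus` are odd powers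
of `y` times this kernel for `(β, γ) = (K', K)` and `(K, K')`. -/
noncomputable def coshCosKernel (β γ x : ℝ) : ℝ := (Real.cosh (β * x) + Real.cos (γ * x))⁻¹

/-- The damped oscillation `e^{-(β + iγ)x}`. -/
noncomputable def expDecay (β γ x : ℝ) : ℂ := Complex.exp (-((β + γ * Complex.I) * x))

variable {β : ℝ} (γ x : ℝ)

lemma cosh_add_cos_pos (hβ : β ≠ 0) : 0 < Real.cosh (β * x) + Real.cos (γ * x) := by
  rcases eq_or_ne x 0 with rfl | hx
  · simp
  · linarith [Real.one_lt_cosh.2 (mul_ne_zero hβ hx), Real.neg_one_le_cos (γ * x)]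

lemma coshCosKernel_pos (hβ : β ≠ 0) : 0 < coshCosKernel β γ x :=
  inv_pos.2 (cosh_add_cos_pos γ x hβ)

lemma coshCosKernel_mul_cosh_add_cos (hβ : β ≠ 0) :
    coshCosKernel β γ x * (Real.cosh (β * x) + Real.cos (γ * x)) = 1 :=
  inv_mul_cancel₀ (cosh_add_cos_pos γ x hβ).ne'

lemma coshCosKernel_neg : coshCosKernel β (-γ) x = coshCosKernel β γ x := by
  rw [coshCosKernel, coshCosKernel, neg_mul, Real.cos_neg]

lemma continuous_coshCosKernel (hβ : β ≠ 0) : Continuous (coshCosKernel β γ) :=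
  Continuous.inv₀ (by fun_prop) fun x ↦ (cosh_add_cos_pos γ x hβ).ne'

lemma coshCosKernel_isBigO (hβ : 0 < β) :
    coshCosKernel β γ =O[atTop] fun x ↦ Real.exp (-(β * x)) := by
  have hexp : Tendsto (fun x : ℝ ↦ Real.exp (β * x)) atTop atTop :=
    Real.tendsto_exp_atTop.comp (tendsto_id.const_mul_atTop hβ)
  refine Asymptotics.IsBigO.of_bound 4 ?_
  filter_upwards [hexp.eventually_ge_atTop 4] with x hx
  have hcosh : Real.exp (β * x) / 2 ≤ Real.cosh (β * x) := by
    rw [Real.cosh_eq]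
    linarith [Real.exp_pos (-(β * x))]
  rw [Real.norm_of_nonneg (coshCosKernel_pos γ x hβ.ne').le, Real.norm_of_nonneg (exp_pos _).le,
    Real.exp_neg, ← div_eq_mul_inv, coshCosKernel, inv_le_comm₀ (cosh_add_cos_pos γ x hβ.ne')
      (by positivity), inv_div]
  linarith [Real.neg_one_le_cos (γ * x)]

lemma integrableOn_pow_mul_coshCosKernel (hβ : 0 < β) (m : ℕ) :
    IntegrableOn (fun x ↦ x ^ m * coshCosKernel β γ x) (Ioi 0) := by
  have hcont := continuous_coshCosKernel γ hβ.ne'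
  refine integrable_of_isBigO_exp_neg (half_pos hβ) (by fun_prop) ?_
  refine ((isLittleO_pow_exp_pos_mul_atTop m (half_pos hβ)).isBigO.mul
    (coshCosKernel_isBigO γ hβ)).congr_right fun x ↦ ?_
  rw [← Real.exp_add]
  ring_nf

lemma norm_expDecay : ‖expDecay β γ x‖ = Real.exp (-(β * x)) := by
  simp [expDecay, Complex.norm_exp]

lemma expDecay_mul_expDecay_neg :
    expDecay β γ x * expDecay β (-γ) x = (Real.exp (-(β * x)) : ℂ) ^ 2 := by
  rw [expDecay, expDecay, ← Complex.exp_add, Complex.ofReal_exp, ← Complex.exp_nat_mul]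
  push_cast
  ring_nf

lemma expDecay_add_expDecay_neg :
    expDecay β γ x + expDecay β (-γ) x = 2 * (Real.exp (-(β * x)) : ℂ) * Real.cos (γ * x) := by
  rw [mul_right_comm, Complex.ofReal_cos, Complex.two_cos, Complex.ofReal_exp, add_mul,
    ← Complex.exp_add, ← Complex.exp_add, expDecay, expDecay, add_comm]
  push_cast
  ring_nf

lemma one_add_expDecay_mul :
    (1 + expDecay β γ x) * (1 + expDecay β (-γ) x) =
      2 * Real.exp (-(β * x)) * (Real.cosh (β * x) + Real.cos (γ * x) : ℝ) := by
  have hinv : (Real.exp (β * x) : ℂ) * Real.exp (-(β * x)) = 1 := by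
    rw [← Complex.ofReal_mul, ← Real.exp_add, add_neg_cancel, Real.exp_zero, Complex.ofReal_one]
  rw [Real.cosh_eq]
  push_cast at hinv ⊢
  have hsum := expDecay_add_expDecay_neg (β := β) γ x
  have hprod := expDecay_mul_expDecay_neg (β := β) γ x
  push_cast at hsum hprod
  linear_combination hsum + hprod - hinv

lemma one_add_expDecay_ne_zero (hβ : β ≠ 0) : 1 + expDecay β γ x ≠ 0 := by
  refine left_ne_zero_of_mul (b := 1 + expDecay β (-γ) x) ?_
  rw [one_add_expDecay_mul]
  have hden := (cosh_add_cos_pos γ x hβ).ne'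
  have hexp := (Real.exp_pos (-(β * x))).ne'
  exact mul_ne_zero (mul_ne_zero two_ne_zero (mod_cast hexp)) (mod_cast hden)

end Kernel

section Laplace

lemma integrableOn_pow_mul_exp_neg_mul {r : ℝ} (hr : 0 < r) (m : ℕ) :
    IntegrableOn (fun x ↦ x ^ m * Real.exp (-(r * x))) (Ioi 0) := by
  refine integrable_of_isBigO_exp_neg (half_pos hr) (by fun_prop) ?_
  refine ((isLittleO_pow_exp_pos_mul_atTop m (half_pos hr)).isBigO.mul
    (Asymptotics.isBigO_refl (fun x ↦ Real.exp (-(r * x))) atTop)).congr_right fun x ↦ ?_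
  rw [← Real.exp_add]
  ring_nf

lemma integral_pow_mul_exp_neg_mul_Ioi {r : ℝ} (hr : 0 < r) (m : ℕ) :
    ∫ x in Ioi 0, x ^ m * Real.exp (-(r * x)) = m ! / r ^ (m + 1) := by
  have h := Real.integral_rpow_mul_exp_neg_mul_Ioi (a := m + 1) (by positivity) hr
  simp only [add_sub_cancel_right, Real.rpow_natCast, Real.Gamma_nat_eq_factorial] at h
  rw [h, one_div, Real.inv_rpow hr.le, inv_mul_eq_div]
  norm_cast

variable {s : ℂ} {x : ℝ}

lemma norm_pow_mul_cexp_neg_mul (hx : 0 ≤ x) (m : ℕ) :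
    ‖(x : ℂ) ^ m * Complex.exp (-(s * x))‖ = x ^ m * Real.exp (-(s.re * x)) := by
  simp [Complex.norm_exp, abs_of_nonneg hx]

lemma integrableOn_pow_mul_cexp_neg_mul (hs : 0 < s.re) (m : ℕ) :
    IntegrableOn (fun x : ℝ ↦ (x : ℂ) ^ m * Complex.exp (-(s * x))) (Ioi 0) := by
  refine (integrableOn_pow_mul_exp_neg_mul hs m).mono'
    (Continuous.aestronglyMeasurable (by fun_prop)) ?_
  filter_upwards [ae_restrict_mem measurableSet_Ioi] with x hx
  exact (norm_pow_mul_cexp_neg_mul (le_of_lt hx) m).le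

lemma integral_pow_mul_cexp_neg_mul_Ioi (hs : 0 < s.re) (m : ℕ) :
    ∫ x : ℝ in Ioi 0, (x : ℂ) ^ m * Complex.exp (-(s * x)) = m ! / s ^ (m + 1) := by
  have hs0 : s ≠ 0 := fun h ↦ by simp [h] at hs
  induction m with
  | zero => simpa [neg_mul] using integral_exp_mul_complex_Ioi (a := -s) (by simpa) 0
  | succ m ih =>
    have hderiv (x : ℝ) : HasDerivAt (fun x : ℝ ↦ (x : ℂ) ^ (m + 1) * Complex.exp (-(s * x)))
        ((m + 1) * ((x : ℂ) ^ m * Complex.exp (-(s * x))) -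
          s * ((x : ℂ) ^ (m + 1) * Complex.exp (-(s * x)))) x := by
      have hx : HasDerivAt (fun x : ℝ ↦ (x : ℂ)) 1 x := Complex.ofRealCLM.hasDerivAt
      refine ((hx.fun_pow (m + 1)).mul (hx.const_mul s).fun_neg.cexp).congr_deriv ?_
      push_cast [Nat.add_sub_cancel]
      ring
    have hlow := (integrableOn_pow_mul_cexp_neg_mul hs m).const_mul ((m : ℂ) + 1)
    have hhigh := (integrableOn_pow_mul_cexp_neg_mul hs (m + 1)).const_mul s
    have hparts := integral_Ioi_of_hasDerivAt_of_tendsto' (a := 0) (fun x _ ↦ hderiv x)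
      (hlow.sub hhigh) (tendsto_zero_of_hasDerivAt_of_integrableOn_Ioi (a := 0)
        (fun x _ ↦ hderiv x) (hlow.sub hhigh) (integrableOn_pow_mul_cexp_neg_mul hs (m + 1)))
    rw [integral_sub hlow hhigh, integral_const_mul, integral_const_mul, ih] at hparts
    have hrec : s * ∫ x : ℝ in Ioi 0, (x : ℂ) ^ (m + 1) * Complex.exp (-(s * x)) =
        (m + 1) * (m ! / s ^ (m + 1)) := by
      simpa [sub_eq_zero, eq_comm (a := s * _)] using hparts
    rw [← mul_right_inj' hs0, hrec, Nat.factorial_succ]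
    push_cast
    field_simp
    ring

end Laplace

section Sinh

variable {γ x : ℝ}

lemma hasSum_exp_neg_odd_mul (hx : 0 < x) :
    HasSum (fun k : ℕ ↦ Real.exp (-((2 * k + 1) * x))) (2 * Real.sinh x)⁻¹ := by
  have hlt : Real.exp (-(2 * x)) < 1 := Real.exp_lt_one_iff.2 (by linarith)
  have hprod : 2 * Real.sinh x = Real.exp x * (1 - Real.exp (-(2 * x))) := by
    rw [Real.sinh_eq, mul_sub, ← Real.exp_add]
    ring_nf
  rw [hprod, mul_inv, ← Real.exp_neg]
  refine ((hasSum_geometric_of_lt_one (Real.exp_pos _).le hlt).mul_left _).congr_fun fun k ↦ ?_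
  rw [← Real.exp_nat_mul, ← Real.exp_add]
  ring_nf

lemma div_sinh_le (hx : 0 < x) : x / Real.sinh x ≤ 2 * Real.exp (-(x / 2)) := by
  have hsinh : x / 2 ≤ Real.sinh (x / 2) := Real.self_le_sinh_iff.2 (by positivity)
  have hcosh : Real.exp (x / 2) / 2 ≤ Real.cosh (x / 2) := by
    rw [Real.cosh_eq]
    linarith [Real.exp_pos (-(x / 2))]
  have hdouble : x * (Real.exp (x / 2) / 2) ≤ Real.sinh x := by
    calc x * (Real.exp (x / 2) / 2) = 2 * (x / 2) * (Real.exp (x / 2) / 2) := by ring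
      _ ≤ 2 * Real.sinh (x / 2) * Real.cosh (x / 2) := by gcongr
      _ = Real.sinh x := by rw [← Real.sinh_two_mul]; ring_nf
  rw [div_le_iff₀ (Real.sinh_pos_iff.2 hx), Real.exp_neg]
  calc x = 2 * (Real.exp (x / 2))⁻¹ * (x * (Real.exp (x / 2) / 2)) := by field_simp
    _ ≤ 2 * (Real.exp (x / 2))⁻¹ * Real.sinh x := by gcongr

variable {s : ℂ}

lemma integrableOn_pow_mul_cexp_div_sinh (hγ : 0 < γ) (hs : 0 ≤ s.re) (n : ℕ) :
    IntegrableOn (fun x : ℝ ↦ (x : ℂ) ^ (n + 1) * Complex.exp (-(s * x)) /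
      (2 * Real.sinh (γ * x) : ℝ)) (Ioi 0) := by
  refine ((integrableOn_pow_mul_exp_neg_mul (half_pos hγ) n).const_mul γ⁻¹).mono'
    (Measurable.aestronglyMeasurable (by fun_prop)) ?_
  filter_upwards [ae_restrict_mem measurableSet_Ioi] with x (hx : 0 < x)
  have hγx : 0 < γ * x := mul_pos hγ hx
  have := Real.sinh_pos_iff.2 hγx
  have hexp : Real.exp (-(s.re * x)) ≤ 1 := Real.exp_le_one_iff.2 (by nlinarith)
  rw [norm_div, norm_pow_mul_cexp_neg_mul hx.le, Complex.norm_real,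
    Real.norm_of_nonneg (by positivity)]
  calc x ^ (n + 1) * Real.exp (-(s.re * x)) / (2 * Real.sinh (γ * x))
      ≤ x ^ (n + 1) * 1 / (2 * Real.sinh (γ * x)) := by gcongr
    _ = γ⁻¹ * (x ^ n * (γ * x / Real.sinh (γ * x) / 2)) := by
        field_simp
        ring
    _ ≤ γ⁻¹ * (x ^ n * (2 * Real.exp (-(γ * x / 2)) / 2)) := by
        gcongr
        exact div_sinh_le hγx
    _ = γ⁻¹ * (x ^ n * Real.exp (-(γ / 2 * x))) := by ring_nf

lemma hasSum_factorial_div_pow (hγ : 0 < γ) (hs : 0 ≤ s.re) (n : ℕ) :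
    HasSum (fun k : ℕ ↦ ((n + 1)! / (s + (2 * k + 1) * γ) ^ (n + 2) : ℂ))
      (∫ x : ℝ in Ioi 0, (x : ℂ) ^ (n + 1) * Complex.exp (-(s * x)) /
        (2 * Real.sinh (γ * x) : ℝ)) := by
  have hre (k : ℕ) : (s + (2 * k + 1) * γ).re = s.re + (2 * k + 1) * γ := by simp
  have hpos (k : ℕ) : 0 < (s + (2 * k + 1) * γ).re := by rw [hre]; positivity
  have hsummable : Summable fun k : ℕ ↦ ∫ x : ℝ in Ioi 0,
      ‖(x : ℂ) ^ (n + 1) * Complex.exp (-((s + (2 * k + 1) * γ) * x))‖ := by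
    have hbase : Summable fun k : ℕ ↦ ((n + 1)! / γ ^ (n + 2)) * (1 / (k + 1 : ℝ) ^ (n + 2)) := by
      refine Summable.mul_left _ ?_
      exact_mod_cast (summable_nat_add_iff 1).2
        (Real.summable_one_div_nat_pow.2 (show 1 < n + 2 by lia))
    refine hbase.of_nonneg_of_le (fun k ↦ integral_nonneg fun x ↦ norm_nonneg _) fun k ↦ ?_
    rw [setIntegral_congr_fun measurableSet_Ioi
      fun x hx ↦ norm_pow_mul_cexp_neg_mul (le_of_lt hx) (n + 1),
      integral_pow_mul_exp_neg_mul_Ioi (hpos k), hre, div_mul_div_comm, mul_one, ← mul_pow]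
    gcongr
    nlinarith [(k.cast_nonneg : (0 : ℝ) ≤ k)]
  have h := hasSum_integral_of_summable_integral_norm
    (fun k ↦ integrableOn_pow_mul_cexp_neg_mul (hpos k) (n + 1)) hsummable
  simp only [integral_pow_mul_cexp_neg_mul_Ioi (hpos _)] at h
  have hseries (x : ℝ) (hx : 0 < x) :
      ∑' k : ℕ, (x : ℂ) ^ (n + 1) * Complex.exp (-((s + (2 * k + 1) * γ) * x)) =
        (x : ℂ) ^ (n + 1) * Complex.exp (-(s * x)) / (2 * Real.sinh (γ * x) : ℝ) := by
    have hexp := (Complex.hasSum_ofReal.2 (hasSum_exp_neg_odd_mul (mul_pos hγ hx))).mul_left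
      ((x : ℂ) ^ (n + 1) * Complex.exp (-(s * x)))
    rw [Complex.ofReal_inv, ← div_eq_mul_inv] at hexp
    rw [← hexp.tsum_eq]
    refine tsum_congr fun k ↦ ?_
    rw [Complex.ofReal_exp, mul_assoc, ← Complex.exp_add]
    push_cast
    ring_nf
  rwa [setIntegral_congr_fun measurableSet_Ioi hseries] at h

end Sinh

section Rows

/-- The points `(u + 1)β + vγi` of the `u`-th row of the lattice with `v = u - 2d`, so that the
coordinates `u + 1` and `v` have opposite parity. -/
noncomputable def rowPoint (β γ : ℝ) (u : ℕ) (d : ℤ) : ℂ :=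
  (u + 1) * β + (u - 2 * d) * γ * Complex.I

/-- The sum of `e^{-sx}` over the points `s = (u + 1)β + vγi` of the `u`-th row with `|v| ≤ u`. -/
noncomputable def innerTerm (β γ : ℝ) (u : ℕ) (x : ℝ) : ℂ :=
  Real.exp (-(β * x)) *
    ∑ d ∈ Finset.range (u + 1), expDecay β (-γ) x ^ d * expDecay β γ x ^ (u - d)

/-- The counterpart of `innerTerm` for the points `s = (u + 1)β + vγi` with `|v| > u`, with `s`
rotated by `±i` into the right half-plane, where the sum over `v` is geometric. -/
noncomputable def outerTerm (β γ : ℝ) (u : ℕ) (x : ℝ) : ℂ :=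
  (expDecay γ β x ^ (u + 1) + expDecay γ (-β) x ^ (u + 1)) / (2 * Real.sinh (γ * x) : ℝ)

variable {β γ : ℝ} (u : ℕ)

lemma expDecay_pow (x : ℝ) :
    expDecay β γ x ^ u = Complex.exp (-(u * (β + γ * Complex.I) * x)) := by
  rw [expDecay, ← Complex.exp_nat_mul]
  ring_nf

lemma innerTerm_eq_sum (x : ℝ) :
    innerTerm β γ u x = ∑ d ∈ Finset.range (u + 1), Complex.exp (-(rowPoint β γ u d * x)) := by
  rw [innerTerm, Finset.mul_sum]
  refine Finset.sum_congr rfl fun d hd ↦ ?_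
  rw [expDecay_pow, expDecay_pow, Complex.ofReal_exp, ← Complex.exp_add, ← Complex.exp_add,
    rowPoint]
  push_cast [Nat.cast_sub (Finset.mem_range_succ_iff.1 hd)]
  ring_nf

lemma rowPoint_re_pos (hβ : 0 < β) (d : ℤ) : 0 < (rowPoint β γ u d).re := by
  have hre : (rowPoint β γ u d).re = (u + 1) * β := by simp [rowPoint]
  rw [hre]
  positivity

lemma integrableOn_pow_mul_innerTerm (hβ : 0 < β) (m : ℕ) :
    IntegrableOn (fun x : ℝ ↦ (x : ℂ) ^ m * innerTerm β γ u x) (Ioi 0) := by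
  simp only [innerTerm_eq_sum, Finset.mul_sum]
  exact integrable_finsetSum _ fun d _ ↦
    integrableOn_pow_mul_cexp_neg_mul (rowPoint_re_pos u hβ d) m

lemma integral_pow_mul_innerTerm (hβ : 0 < β) (m : ℕ) :
    ∫ x : ℝ in Ioi 0, (x : ℂ) ^ m * innerTerm β γ u x =
      ∑ d ∈ Finset.range (u + 1), m ! / rowPoint β γ u d ^ (m + 1) := by
  simp only [innerTerm_eq_sum, Finset.mul_sum]
  rw [integral_finsetSum _ fun (d : ℕ) _ ↦
    integrableOn_pow_mul_cexp_neg_mul (rowPoint_re_pos u hβ d) m]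
  exact Finset.sum_congr rfl fun d _ ↦
    integral_pow_mul_cexp_neg_mul_Ioi (rowPoint_re_pos u hβ d) m

lemma pow_mul_outerTerm_eq (m : ℕ) (x : ℝ) :
    (x : ℂ) ^ m * outerTerm β γ u x =
      (x : ℂ) ^ m * Complex.exp (-((u + 1) * (γ + β * Complex.I) * x)) /
          (2 * Real.sinh (γ * x) : ℝ) +
        (x : ℂ) ^ m * Complex.exp (-((u + 1) * (γ + (-β : ℝ) * Complex.I) * x)) /
          (2 * Real.sinh (γ * x) : ℝ) := by
  rw [outerTerm, expDecay_pow, expDecay_pow]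
  push_cast
  ring_nf

lemma add_one_mul_re_nonneg (β : ℝ) (hγ : 0 < γ) :
    0 ≤ ((u + 1) * (γ + β * Complex.I) : ℂ).re := by
  have hre : ((u + 1) * (γ + β * Complex.I) : ℂ).re = (u + 1) * γ := by simp
  rw [hre]
  positivity

lemma integrableOn_pow_mul_outerTerm (hγ : 0 < γ) (n : ℕ) :
    IntegrableOn (fun x : ℝ ↦ (x : ℂ) ^ (n + 1) * outerTerm β γ u x) (Ioi 0) := by
  simp only [pow_mul_outerTerm_eq]
  exact (integrableOn_pow_mul_cexp_div_sinh hγ (add_one_mul_re_nonneg u β hγ) n).add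
    (integrableOn_pow_mul_cexp_div_sinh hγ (add_one_mul_re_nonneg u (-β) hγ) n)

lemma hasSum_int_of_tails {G : Type*} [AddCommGroup G] [TopologicalSpace G]
    [IsTopologicalAddGroup G] {f : ℤ → G} {N : ℕ} {a b : G}
    (hright : HasSum (fun k : ℕ ↦ f ↑(k + N)) a) (hleft : HasSum (fun k : ℕ ↦ f (-(k + 1))) b) :
    HasSum f (∑ d ∈ Finset.range N, f d + (a + b)) := by
  convert ((hasSum_nat_add_iff (f := fun k : ℕ ↦ f k) N).1 hright).of_nat_of_neg_add_one hleft
    using 1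
  abel

lemma hasSum_factorial_div_mul_pow {c s : ℂ} (hc : c ^ 2 = -1) (hγ : 0 < γ) (hs : 0 ≤ s.re)
    (n : ℕ) :
    HasSum (fun k : ℕ ↦ ((2 * n + 1)! / (c * (s + (2 * k + 1) * γ)) ^ (2 * n + 2) : ℂ))
      ((-1) ^ (n + 1) * ∫ x : ℝ in Ioi 0, (x : ℂ) ^ (2 * n + 1) * Complex.exp (-(s * x)) /
        (2 * Real.sinh (γ * x) : ℝ)) := by
  refine ((hasSum_factorial_div_pow hγ hs (2 * n)).mul_left _).congr_fun fun k ↦ ?_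
  have hpow : c ^ (2 * n + 2) = (-1) ^ (n + 1) := by rw [← mul_add_one, pow_mul, hc]
  rw [mul_pow, hpow, div_mul_eq_div_div_swap, div_eq_mul_inv _ ((-1) ^ (n + 1) : ℂ), ← inv_pow,
    inv_neg_one, mul_comm]

lemma hasSum_factorial_div_rowPoint_pow (hβ : 0 < β) (hγ : 0 < γ) (n : ℕ) :
    HasSum (fun d : ℤ ↦ (2 * n + 1)! / rowPoint β γ u d ^ (2 * n + 2))
      ((∫ x : ℝ in Ioi 0, (x : ℂ) ^ (2 * n + 1) * innerTerm β γ u x) +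
        (-1) ^ (n + 1) * ∫ x : ℝ in Ioi 0, (x : ℂ) ^ (2 * n + 1) * outerTerm β γ u x) := by
  have hre₁ := add_one_mul_re_nonneg u β hγ
  have hre₂ := add_one_mul_re_nonneg u (-β) hγ
  have hright := hasSum_factorial_div_mul_pow (c := -Complex.I) (by simp) hγ hre₁ n
  have hleft := hasSum_factorial_div_mul_pow Complex.I_sq hγ hre₂ n
  have hrow₁ (k : ℕ) : -Complex.I * ((u + 1) * (γ + β * Complex.I) + (2 * k + 1) * γ) =
      rowPoint β γ u ↑(k + (u + 1)) := by
    rw [rowPoint]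
    push_cast
    linear_combination (-(u + 1) * β : ℂ) * Complex.I_sq
  have hrow₂ (k : ℕ) :
      Complex.I * ((u + 1) * (γ + (-β : ℝ) * Complex.I) + (2 * k + 1) * γ) =
        rowPoint β γ u (-(k + 1)) := by
    rw [rowPoint]
    push_cast
    linear_combination (-(u + 1) * β : ℂ) * Complex.I_sq
  simp only [hrow₁] at hright
  simp only [hrow₂] at hleft
  rw [integral_pow_mul_innerTerm u hβ]
  simp only [pow_mul_outerTerm_eq]
  rw [integral_add (integrableOn_pow_mul_cexp_div_sinh hγ hre₁ (2 * n))
    (integrableOn_pow_mul_cexp_div_sinh hγ hre₂ (2 * n)), mul_add]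
  exact hasSum_int_of_tails (f := fun d : ℤ ↦ (2 * n + 1)! / rowPoint β γ u d ^ (2 * n + 2))
    hright hleft

lemma tsum_factorial_div_rowPoint_pow (hβ : 0 < β) (hγ : 0 < γ) {m : ℕ} (hm : 1 ≤ m) :
    ∑' d : ℤ, m ! / rowPoint β γ u d ^ (m + 1) =
      (π / γ : ℂ) ^ (m + 1) *
        ∑' k : ℕ, (k : ℂ) ^ m * ((-1) ^ u * (Real.exp (-(π * β / γ)) : ℂ) ^ (u + 1)) ^ k := by
  have hγ' : (γ : ℂ) ≠ 0 := mod_cast hγ.ne'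
  let τ : UpperHalfPlane :=
    ⟨⟨-u / 2, (u + 1) * β / (2 * γ)⟩, by positivity⟩
  have hτ : (τ : ℂ) = (-u / 2 : ℝ) + ((u + 1) * β / (2 * γ) : ℝ) * Complex.I :=
    Complex.mk_eq_add_mul_I _ _
  have hnome : Complex.exp (2 * π * Complex.I * τ) =
      (-1) ^ u * (Real.exp (-(π * β / γ)) : ℂ) ^ (u + 1) := by
    rw [← Complex.exp_neg_pi_mul_I, Complex.ofReal_exp, ← Complex.exp_nat_mul,
      ← Complex.exp_nat_mul, ← Complex.exp_add, hτ]
    congr 1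
    push_cast
    linear_combination ((u + 1) * π * β / γ : ℂ) * Complex.I_sq
  have hpoint (d : ℤ) : rowPoint β γ u d = -2 * γ * Complex.I * (τ + d) := by
    rw [rowPoint, hτ]
    push_cast
    field_simp
    linear_combination ((u + 1) * β : ℂ) * Complex.I_sq
  have hlip := EisensteinSeries.qExpansion_identity hm τ
  rw [hnome] at hlip
  simp only [hpoint, mul_pow _ ((τ : ℂ) + _), div_mul_eq_div_mul_one_div (m ! : ℂ)]
  rw [tsum_mul_left, hlip, ← mul_assoc]
  have hfactorial : (m ! : ℂ) ≠ 0 := mod_cast m.factorial_ne_zero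
  rw [div_mul_div_comm, mul_comm (m ! : ℂ), mul_div_mul_right _ _ hfactorial, ← div_pow]
  congr 2
  field_simp

lemma integral_innerTerm_add_integral_outerTerm (hβ : 0 < β) (hγ : 0 < γ) (n : ℕ) :
    (∫ x : ℝ in Ioi 0, (x : ℂ) ^ (2 * n + 1) * innerTerm β γ u x) +
        (-1) ^ (n + 1) * ∫ x : ℝ in Ioi 0, (x : ℂ) ^ (2 * n + 1) * outerTerm β γ u x =
      (π / γ : ℂ) ^ (2 * n + 2) * ∑' k : ℕ, (k : ℂ) ^ (2 * n + 1) *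
        ((-1) ^ u * (Real.exp (-(π * β / γ)) : ℂ) ^ (u + 1)) ^ k := by
  rw [← (hasSum_factorial_div_rowPoint_pow u hβ hγ n).tsum_eq]
  exact tsum_factorial_div_rowPoint_pow u hβ hγ (by lia)

end Rows

section Lambert

variable {𝕜 : Type*} [NormedField 𝕜] {q : 𝕜}

lemma norm_lambert_term_le (hq : ‖q‖ ≤ 1) (m u k : ℕ) :
    ‖(-1) ^ u * (((k : 𝕜) + 1) ^ m * ((-1) ^ u * q ^ (u + 1)) ^ (k + 1))‖ ≤
      ‖q‖ ^ u * (‖(k : 𝕜) + 1‖ ^ m * ‖q‖ ^ (k + 1)) := by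
  have hnorm : ‖(-1) ^ u * (((k : 𝕜) + 1) ^ m * ((-1) ^ u * q ^ (u + 1)) ^ (k + 1))‖ =
      ‖(k : 𝕜) + 1‖ ^ m * ‖q‖ ^ ((u + 1) * (k + 1)) := by simp [pow_mul]
  rw [hnorm, mul_left_comm, ← pow_add]
  gcongr ?_ * ?_
  exact pow_le_pow_of_le_one (norm_nonneg q) hq (by nlinarith)

lemma hasSum_lambert_column (hq : ‖q‖ < 1) (m k : ℕ) :
    HasSum (fun u : ℕ ↦ (-1) ^ u * (((k : 𝕜) + 1) ^ m * ((-1) ^ u * q ^ (u + 1)) ^ (k + 1)))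
      (((k : 𝕜) + 1) ^ m * q ^ (k + 1) / (1 + (-q) ^ (k + 1))) := by
  have hlt : ‖-(-q) ^ (k + 1)‖ < 1 := by
    rw [norm_neg, norm_pow, norm_neg]
    exact pow_lt_one₀ (norm_nonneg q) hq k.succ_ne_zero
  have hgeom := (hasSum_geometric_of_norm_lt_one hlt).mul_left (((k : 𝕜) + 1) ^ m * q ^ (k + 1))
  rw [sub_neg_eq_add, ← div_eq_mul_inv] at hgeom
  refine hgeom.congr_fun fun u ↦ ?_
  rw [neg_pow ((-q) ^ (k + 1)), ← pow_mul, neg_pow q]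
  ring

lemma hasSum_lambert_row [CompleteSpace 𝕜] (hq : ‖q‖ < 1) {m : ℕ} (hm : m ≠ 0) :
    HasSum (fun u : ℕ ↦ (-1) ^ u * ∑' k : ℕ, (k : 𝕜) ^ m * ((-1) ^ u * q ^ (u + 1)) ^ k)
      (∑' k : ℕ, ((k : 𝕜) + 1) ^ m * q ^ (k + 1) / (1 + (-q) ^ (k + 1))) := by
  have hrows : Summable fun u : ℕ ↦ ‖q‖ ^ u := summable_geometric_of_lt_one (norm_nonneg q) hq
  have hcolumns : Summable fun k : ℕ ↦ ‖(k : 𝕜) + 1‖ ^ m * ‖q‖ ^ (k + 1) := by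
    simpa using (summable_nat_add_iff 1).2 (summable_norm_pow_mul_geometric_of_norm_lt_one m hq)
  have hmajorant : Summable fun p : ℕ × ℕ ↦
      ‖q‖ ^ p.1 * (‖(p.2 : 𝕜) + 1‖ ^ m * ‖q‖ ^ (p.2 + 1)) :=
    hrows.mul_of_nonneg hcolumns (fun _ ↦ by positivity) fun _ ↦ by positivity
  have hdouble : Summable (Function.uncurry fun u k : ℕ ↦
      (-1) ^ u * (((k : 𝕜) + 1) ^ m * ((-1) ^ u * q ^ (u + 1)) ^ (k + 1))) :=
    hmajorant.of_norm_bounded fun p ↦ norm_lambert_term_le hq.le m p.1 p.2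
  have hrow (u : ℕ) : ∑' k : ℕ, (k : 𝕜) ^ m * ((-1) ^ u * q ^ (u + 1)) ^ k =
      ∑' k : ℕ, ((k : 𝕜) + 1) ^ m * ((-1) ^ u * q ^ (u + 1)) ^ (k + 1) := by
    have hlt : ‖(-1) ^ u * q ^ (u + 1)‖ < 1 := by
      simpa using pow_lt_one₀ (norm_nonneg q) hq u.succ_ne_zero
    rw [(summable_norm_pow_mul_geometric_of_norm_lt_one m hlt).of_norm.tsum_eq_zero_add]
    simp [hm]
  simp only [hrow, ← tsum_mul_left]
  rw [← tsum_congr fun k ↦ (hasSum_lambert_column hq m k).tsum_eq, hdouble.tsum_comm]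
  exact hdouble.prod.hasSum

end Lambert

section Limits

lemma tendsto_sum_integral {α E : Type*} [MeasurableSpace α] {μ : Measure α}
    [NormedAddCommGroup E] [NormedSpace ℝ E] {f : ℕ → α → E} {g : α → E} {bound : α → ℝ}
    (hf : ∀ u, Integrable (f u) μ) (hbound : Integrable bound μ)
    (h_le : ∀ N, ∀ᵐ x ∂μ, ‖∑ u ∈ Finset.range N, f u x‖ ≤ bound x)
    (h_lim : ∀ᵐ x ∂μ, Tendsto (fun N ↦ ∑ u ∈ Finset.range N, f u x) atTop (𝓝 (g x))) :
    Tendsto (fun N ↦ ∑ u ∈ Finset.range N, ∫ x, f u x ∂μ) atTop (𝓝 (∫ x, g x ∂μ)) := by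
  simp only [← integral_finsetSum _ fun u _ ↦ hf u]
  exact tendsto_integral_of_dominated_convergence bound
    (fun N ↦ (integrable_finsetSum _ fun u _ ↦ hf u).aestronglyMeasurable) hbound h_le h_lim

variable {β γ x : ℝ}

lemma add_one_mul_exp_neg_pow_le (hx : 0 < x) (N : ℕ) :
    (N + 1) * Real.exp (-x) ^ N ≤ 1 + x⁻¹ := by
  have hpow : Real.exp (-x) ^ N = Real.exp (-(N * x)) := by
    rw [← Real.exp_nat_mul, mul_neg]
  have hle : N * x * Real.exp (-(N * x)) ≤ 1 :=
    (Real.mul_exp_neg_le_exp_neg_one _).trans (Real.exp_le_one_iff.2 (by simp))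
  rw [add_mul, one_mul, add_comm, hpow]
  gcongr
  · exact Real.exp_le_one_iff.2 (neg_nonpos.2 (by positivity))
  · rw [← one_div, le_div_iff₀ hx]
    linarith

lemma sum_neg_one_pow_mul_innerTerm (hβ : β ≠ 0) (N : ℕ) :
    ∑ u ∈ Finset.range N, (-1) ^ u * innerTerm β γ u x =
      (coshCosKernel β γ x / 2 : ℝ) * ((1 + expDecay β (-γ) x) * (1 + expDecay β γ x) *
        ∑ u ∈ Finset.range N, (-1) ^ u *
          ∑ d ∈ Finset.range (u + 1), expDecay β (-γ) x ^ d * expDecay β γ x ^ (u - d)) := by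
  have hker : (coshCosKernel β γ x : ℂ) * (Real.cosh (β * x) + Real.cos (γ * x) : ℝ) = 1 :=
    mod_cast coshCosKernel_mul_cosh_add_cos γ x hβ
  have hexp : (Real.exp (-(β * x)) : ℂ) = (coshCosKernel β γ x / 2 : ℝ) *
      ((1 + expDecay β (-γ) x) * (1 + expDecay β γ x)) := by
    rw [mul_comm (1 + _), one_add_expDecay_mul, Complex.ofReal_div, Complex.ofReal_ofNat]
    linear_combination (-Real.exp (-(β * x)) : ℂ) * hker
  simp only [innerTerm]
  rw [← mul_assoc, ← hexp, Finset.mul_sum]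
  exact Finset.sum_congr rfl fun u _ ↦ mul_left_comm _ _ _

lemma norm_pow_mul_sum_innerTerm_le (hβ : 0 < β) (hx : 0 < x) (n N : ℕ) :
    ‖(x : ℂ) ^ (n + 1) * ∑ u ∈ Finset.range N, (-1) ^ u * innerTerm β γ u x‖ ≤
      2 * (x ^ (n + 1) * coshCosKernel β γ x) + β⁻¹ * (x ^ n * coshCosKernel β γ x) := by
  have hker := coshCosKernel_pos γ x hβ.ne'
  have hβx : 0 < β * x := mul_pos hβ hx
  have hgeom := norm_one_add_mul_sum_geom_sum₂_le (norm_expDecay (β := β) (-γ) x).le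
    (norm_expDecay γ x).le (Real.exp_le_one_iff.2 (neg_nonpos.2 hβx.le)) N
  rw [sum_neg_one_pow_mul_innerTerm hβ.ne', norm_mul, norm_mul, norm_pow, Complex.norm_real,
    Complex.norm_real, Real.norm_of_nonneg hx.le, Real.norm_of_nonneg (half_pos hker).le]
  calc x ^ (n + 1) * (coshCosKernel β γ x / 2 * _)
      ≤ x ^ (n + 1) * (coshCosKernel β γ x / 2 * (2 + 2 * (1 + (β * x)⁻¹))) := by
        gcongr
        exact hgeom.trans (by gcongr; exact add_one_mul_exp_neg_pow_le hβx N)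
    _ = 2 * (x ^ (n + 1) * coshCosKernel β γ x) + β⁻¹ * (x ^ n * coshCosKernel β γ x) := by
        field_simp
        ring

lemma tendsto_sum_innerTerm (hβ : 0 < β) (hx : 0 < x) :
    Tendsto (fun N ↦ ∑ u ∈ Finset.range N, (-1) ^ u * innerTerm β γ u x) atTop
      (𝓝 (coshCosKernel β γ x / 2 : ℝ)) := by
  simp only [sum_neg_one_pow_mul_innerTerm hβ.ne']
  simpa only [mul_one] using (tendsto_one_add_mul_sum_geom_sum₂
    (norm_expDecay (β := β) (-γ) x).le (norm_expDecay γ x).le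
    (Real.exp_lt_one_iff.2 (neg_lt_zero.2 (mul_pos hβ hx)))).const_mul _

lemma tendsto_sum_integral_innerTerm (hβ : 0 < β) (n : ℕ) :
    Tendsto (fun N ↦ ∑ u ∈ Finset.range N,
      (-1) ^ u * ∫ x : ℝ in Ioi 0, (x : ℂ) ^ (n + 1) * innerTerm β γ u x) atTop
      (𝓝 ((∫ x in Ioi 0, x ^ (n + 1) * coshCosKernel β γ x) / 2 : ℝ)) := by
  simp only [← integral_const_mul, ← integral_div, ← integral_complex_ofReal]
  refine tendsto_sum_integral
    (fun u ↦ (integrableOn_pow_mul_innerTerm u hβ (n + 1)).const_mul _)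
    (((integrableOn_pow_mul_coshCosKernel γ hβ (n + 1)).const_mul 2).add
      ((integrableOn_pow_mul_coshCosKernel γ hβ n).const_mul β⁻¹)) (fun N ↦ ?_) ?_
  all_goals
    filter_upwards [ae_restrict_mem measurableSet_Ioi] with x (hx : 0 < x)
    simp only [mul_left_comm _ ((x : ℂ) ^ (n + 1)), ← Finset.mul_sum]
  · exact norm_pow_mul_sum_innerTerm_le hβ hx n N
  · rw [mul_div_assoc, Complex.ofReal_mul, Complex.ofReal_pow]
    exact (tendsto_sum_innerTerm hβ hx).const_mul _

end Limits

section Outer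

variable {β γ x : ℝ}

lemma expDecay_div_one_add_add_neg (γ x : ℝ) (hβ : β ≠ 0) :
    expDecay β γ x / (1 + expDecay β γ x) + expDecay β (-γ) x / (1 + expDecay β (-γ) x) =
      (1 - Real.sinh (β * x) * coshCosKernel β γ x : ℝ) := by
  have hne := one_add_expDecay_ne_zero γ x hβ
  have hne' := one_add_expDecay_ne_zero (-γ) x hβ
  have hker : (coshCosKernel β γ x : ℂ) * (Real.cosh (β * x) + Real.cos (γ * x) : ℝ) = 1 :=
    mod_cast coshCosKernel_mul_cosh_add_cos γ x hβ
  have hexp : (Real.cosh (β * x) - Real.sinh (β * x) : ℂ) = Real.exp (-(β * x)) :=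
    mod_cast Real.cosh_sub_sinh (β * x)
  rw [div_add_div _ _ hne hne', div_eq_iff (mul_ne_zero hne hne'), one_add_expDecay_mul]
  have hsum := expDecay_add_expDecay_neg (β := β) γ x
  have hprod := expDecay_mul_expDecay_neg (β := β) γ x
  push_cast at hker hexp hsum hprod ⊢
  linear_combination hsum + 2 * hprod + 2 * Complex.exp (-(β * x)) *
    (Complex.sinh (β * x) * hker - hexp)

lemma norm_expDecay_div_one_add_le (γ : ℝ) (hβ : 0 < β) (hx : 0 ≤ x) :
    ‖expDecay β γ x / (1 + expDecay β γ x)‖ ≤ coshCosKernel β γ x := by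
  have hden := cosh_add_cos_pos γ x hβ.ne'
  have hnorm : ‖1 + expDecay β (-γ) x‖ ≤ 1 + 1 := by
    refine (norm_add_le _ _).trans ?_
    rw [norm_one, norm_expDecay]
    gcongr
    exact Real.exp_le_one_iff.2 (neg_nonpos.2 (by positivity))
  rw [← mul_div_mul_right _ _ (one_add_expDecay_ne_zero (-γ) x hβ.ne'), one_add_expDecay_mul,
    norm_div, norm_mul, norm_mul, norm_mul, norm_expDecay, Complex.norm_real, Complex.norm_real,
    Complex.norm_ofNat, Real.norm_of_nonneg hden.le, Real.norm_of_nonneg (Real.exp_pos _).le,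
    coshCosKernel]
  calc Real.exp (-(β * x)) * ‖1 + expDecay β (-γ) x‖ / _
      ≤ Real.exp (-(β * x)) * (1 + 1) / _ := by gcongr
    _ = (Real.cosh (β * x) + Real.cos (γ * x))⁻¹ := by
        have := hden.ne'
        field_simp
        ring

lemma sum_neg_one_pow_mul_outerTerm (hγ : γ ≠ 0) (N : ℕ) :
    ∑ u ∈ Finset.range N, (-1) ^ u * outerTerm β γ u x =
      (expDecay γ β x / (1 + expDecay γ β x) * (1 - (-expDecay γ β x) ^ N) +
        expDecay γ (-β) x / (1 + expDecay γ (-β) x) * (1 - (-expDecay γ (-β) x) ^ N)) /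
          (2 * Real.sinh (γ * x) : ℝ) := by
  rw [← sum_neg_one_pow_mul_pow_succ (one_add_expDecay_ne_zero β x hγ),
    ← sum_neg_one_pow_mul_pow_succ (one_add_expDecay_ne_zero (-β) x hγ), ← Finset.sum_add_distrib,
    Finset.sum_div]
  refine Finset.sum_congr rfl fun u _ ↦ ?_
  rw [outerTerm, mul_div_assoc', mul_add]

lemma norm_pow_mul_sum_outerTerm_le (hγ : 0 < γ) (hx : 0 < x) (n N : ℕ) :
    ‖(x : ℂ) ^ (n + 1) * ∑ u ∈ Finset.range N, (-1) ^ u * outerTerm β γ u x‖ ≤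
      2 * γ⁻¹ * (x ^ n * coshCosKernel γ β x) := by
  have hγx : 0 < γ * x := mul_pos hγ hx
  have hsinh : γ * x ≤ Real.sinh (γ * x) := Real.self_le_sinh_iff.2 hγx.le
  have hker := coshCosKernel_pos β x hγ.ne'
  have hterm (b : ℝ) :
      ‖expDecay γ b x / (1 + expDecay γ b x) * (1 - (-expDecay γ b x) ^ N)‖ ≤
        coshCosKernel γ b x * (1 + 1) := by
    refine (norm_mul _ _).trans_le (mul_le_mul (norm_expDecay_div_one_add_le b hγ hx.le)
      ((norm_sub_le _ _).trans ?_) (norm_nonneg _) (coshCosKernel_pos b x hγ.ne').le)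
    rw [norm_one, norm_pow, norm_neg, norm_expDecay]
    gcongr
    exact pow_le_one₀ (Real.exp_pos _).le (Real.exp_le_one_iff.2 (neg_nonpos.2 hγx.le))
  have hsum := (norm_add_le _ _).trans (add_le_add (hterm β) (hterm (-β)))
  rw [coshCosKernel_neg] at hsum
  rw [sum_neg_one_pow_mul_outerTerm hγ.ne', norm_mul, norm_div, norm_pow, Complex.norm_real,
    Complex.norm_real, Real.norm_of_nonneg hx.le, Real.norm_of_nonneg (by linarith)]
  calc x ^ (n + 1) * (_ / (2 * Real.sinh (γ * x)))
      ≤ x ^ (n + 1) * ((coshCosKernel γ β x * (1 + 1) + coshCosKernel γ β x * (1 + 1)) /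
          (2 * (γ * x))) := by gcongr
    _ = 2 * γ⁻¹ * (x ^ n * coshCosKernel γ β x) := by
        field_simp
        ring

lemma tendsto_sum_outerTerm (hγ : 0 < γ) (hx : 0 < x) :
    Tendsto (fun N ↦ ∑ u ∈ Finset.range N, (-1) ^ u * outerTerm β γ u x) atTop
      (𝓝 (((Real.sinh (γ * x))⁻¹ - coshCosKernel γ β x) / 2 : ℝ)) := by
  have hγx : 0 < γ * x := mul_pos hγ hx
  have hterm (b : ℝ) : Tendsto (fun N : ℕ ↦
      expDecay γ b x / (1 + expDecay γ b x) * (1 - (-expDecay γ b x) ^ N)) atTop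
        (𝓝 (expDecay γ b x / (1 + expDecay γ b x))) := by
    have hlt : ‖-expDecay γ b x‖ < 1 := by
      rw [norm_neg, norm_expDecay]
      exact Real.exp_lt_one_iff.2 (neg_lt_zero.2 hγx)
    simpa using ((tendsto_pow_atTop_nhds_zero_of_norm_lt_one hlt).const_sub 1).const_mul
      (expDecay γ b x / (1 + expDecay γ b x))
  have hlim := ((hterm β).add (hterm (-β))).div_const ((2 * Real.sinh (γ * x) : ℝ) : ℂ)
  rw [expDecay_div_one_add_add_neg β x hγ.ne', ← Complex.ofReal_div] at hlim
  have hsinh := (Real.sinh_pos_iff.2 hγx).ne'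
  have hvalue : (1 - Real.sinh (γ * x) * coshCosKernel γ β x) / (2 * Real.sinh (γ * x)) =
      ((Real.sinh (γ * x))⁻¹ - coshCosKernel γ β x) / 2 := by
    field_simp
  simpa only [sum_neg_one_pow_mul_outerTerm hγ.ne', hvalue] using hlim

lemma integrableOn_pow_div_sinh (hγ : 0 < γ) (n : ℕ) :
    IntegrableOn (fun x ↦ x ^ (n + 1) / Real.sinh (γ * x)) (Ioi 0) := by
  have h := ((integrableOn_pow_mul_cexp_div_sinh hγ (s := 0) le_rfl n).const_mul 2).re
  refine h.congr (Eventually.of_forall fun x ↦ ?_)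
  have hcast : 2 * ((x : ℂ) ^ (n + 1) * Complex.exp (-(0 * x)) / (2 * Real.sinh (γ * x) : ℝ)) =
      (x ^ (n + 1) / Real.sinh (γ * x) : ℝ) := by
    rw [zero_mul, neg_zero, Complex.exp_zero]
    push_cast
    ring
  exact congrArg Complex.re hcast

lemma tendsto_sum_integral_outerTerm (hγ : 0 < γ) (n : ℕ) :
    Tendsto (fun N ↦ ∑ u ∈ Finset.range N,
      (-1) ^ u * ∫ x : ℝ in Ioi 0, (x : ℂ) ^ (n + 1) * outerTerm β γ u x) atTop
      (𝓝 (((∫ x in Ioi 0, x ^ (n + 1) / Real.sinh (γ * x)) -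
        ∫ x in Ioi 0, x ^ (n + 1) * coshCosKernel γ β x) / 2 : ℝ)) := by
  rw [← integral_sub (integrableOn_pow_div_sinh hγ n)
    (integrableOn_pow_mul_coshCosKernel β hγ (n + 1))]
  simp only [← integral_const_mul, ← integral_div, ← integral_complex_ofReal]
  refine tendsto_sum_integral
    (fun u ↦ (integrableOn_pow_mul_outerTerm u hγ n).const_mul _)
    ((integrableOn_pow_mul_coshCosKernel β hγ n).const_mul (2 * γ⁻¹)) (fun N ↦ ?_) ?_
  all_goals
    filter_upwards [ae_restrict_mem measurableSet_Ioi] with x (hx : 0 < x)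
    simp only [mul_left_comm _ ((x : ℂ) ^ (n + 1)), ← Finset.mul_sum]
  · exact norm_pow_mul_sum_outerTerm_le hγ hx n N
  · rw [div_eq_mul_inv (x ^ (n + 1)), ← mul_sub, mul_div_assoc, Complex.ofReal_mul,
      Complex.ofReal_pow]
    exact (tendsto_sum_outerTerm hγ hx).const_mul _

end Outer

section Euler

lemma hasSum_one_div_odd_pow {p : ℕ} (hp : p ≠ 0) :
    HasSum (fun k : ℕ ↦ 1 / (2 * (k : ℝ) + 1) ^ (2 * p))
      ((-1) ^ (p + 1) * (2 ^ (2 * p) - 1) * π ^ (2 * p) * bernoulli (2 * p) /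
        (2 * (2 * p)!)) := by
  have hall := hasSum_zeta_nat hp
  have heven := hall.mul_left (1 / 2 ^ (2 * p))
  have hodd : Summable fun k : ℕ ↦ 1 / (2 * (k : ℝ) + 1) ^ (2 * p) := by
    have hinj : Function.Injective fun k : ℕ ↦ 2 * k + 1 := fun a b h ↦ by grind
    simpa [Function.comp_def] using hall.summable.comp_injective hinj
  have hsplit := hall.unique <| HasSum.even_add_odd (f := fun n : ℕ ↦ 1 / (n : ℝ) ^ (2 * p))
    (heven.congr_fun fun k ↦ by push_cast; rw [mul_pow, div_mul_div_comm, one_mul])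
    (hodd.hasSum.congr_fun fun k ↦ by push_cast; rfl)
  have hpow : (2 : ℝ) ^ (2 * p) = 2 * 2 ^ (2 * p - 1) := (mul_pow_sub_one (by lia) 2).symm
  convert hodd.hasSum using 1
  rw [← sub_eq_iff_eq_add'.2 hsplit, hpow]
  field_simp

lemma integral_pow_div_sinh {γ : ℝ} (hγ : 0 < γ) (n : ℕ) :
    ∫ x in Ioi 0, x ^ (2 * n + 1) / Real.sinh (γ * x) =
      (π / γ) ^ (2 * n + 2) *
        ((-1) ^ n * ((2 ^ (2 * n + 2) - 1) * bernoulli (2 * n + 2) / (2 * n + 2))) := by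
  have hlaplace := hasSum_factorial_div_pow hγ (s := 0) le_rfl (2 * n)
  have hvalue : ∫ x : ℝ in Ioi 0, (x : ℂ) ^ (2 * n + 1) * Complex.exp (-(0 * x)) /
      (2 * Real.sinh (γ * x) : ℝ) =
        ((∫ x in Ioi 0, x ^ (2 * n + 1) / Real.sinh (γ * x)) / 2 : ℝ) := by
    rw [← integral_div, ← integral_complex_ofReal]
    congr 1 with x
    rw [zero_mul, neg_zero, Complex.exp_zero, mul_one, div_div, mul_comm (Real.sinh _)]
    push_cast
    rfl
  have hterm (k : ℕ) : ((2 * n + 1)! / (0 + (2 * k + 1) * γ) ^ (2 * n + 2) : ℂ) =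
      ((2 * n + 1)! / γ ^ (2 * n + 2) * (1 / (2 * (k : ℝ) + 1) ^ (2 * n + 2)) : ℝ) := by
    rw [zero_add, mul_pow]
    push_cast
    field_simp
  rw [hvalue] at hlaplace
  simp only [hterm] at hlaplace
  have heuler := (hasSum_one_div_odd_pow n.add_one_ne_zero).mul_left
    ((2 * n + 1)! / γ ^ (2 * n + 2))
  rw [mul_add_one] at heuler
  rw [(div_eq_iff two_ne_zero).1 ((Complex.hasSum_ofReal.1 hlaplace).unique heuler),
    Nat.factorial_succ (2 * n + 1), div_pow]
  push_cast
  field_simp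
  ring

end Euler

section Moments

variable {β γ : ℝ}

lemma integral_pow_mul_coshCosKernel_add (hβ : 0 < β) (hγ : 0 < γ) (n : ℕ) :
    (∫ x in Ioi 0, x ^ (2 * n + 1) * coshCosKernel β γ x) +
        (-1) ^ n * ∫ x in Ioi 0, x ^ (2 * n + 1) * coshCosKernel γ β x =
      (π / γ) ^ (2 * n + 2) * ((2 ^ (2 * n + 2) - 1) * bernoulli (2 * n + 2) / (2 * n + 2) +
        2 * ∑' k : ℕ, ((k : ℝ) + 1) ^ (2 * n + 1) * Real.exp (-(π * β / γ)) ^ (k + 1) /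
          (1 + (-Real.exp (-(π * β / γ))) ^ (k + 1))) := by
  have hnome : ‖(Real.exp (-(π * β / γ)) : ℂ)‖ < 1 := by
    rw [Complex.norm_real, Real.norm_of_nonneg (Real.exp_pos _).le, Real.exp_lt_one_iff]
    exact neg_lt_zero.2 (by positivity)
  have hlambert := ((hasSum_lambert_row hnome (2 * n).add_one_ne_zero).mul_left
    ((π / γ : ℂ) ^ (2 * n + 2))).tendsto_sum_nat
  have hintegrals := (tendsto_sum_integral_innerTerm (γ := γ) hβ (2 * n)).add
    ((tendsto_sum_integral_outerTerm (β := β) hγ (2 * n)).const_mul ((-1) ^ (n + 1)))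
  have hlim := tendsto_nhds_unique hlambert <| hintegrals.congr fun N ↦ by
    rw [Finset.mul_sum, ← Finset.sum_add_distrib]
    refine Finset.sum_congr rfl fun u _ ↦ ?_
    linear_combination (-1) ^ u * integral_innerTerm_add_integral_outerTerm u hβ hγ n
  have hreal : (π / γ) ^ (2 * n + 2) * ∑' k : ℕ, ((k : ℝ) + 1) ^ (2 * n + 1) *
      Real.exp (-(π * β / γ)) ^ (k + 1) / (1 + (-Real.exp (-(π * β / γ))) ^ (k + 1)) =
      (∫ x in Ioi 0, x ^ (2 * n + 1) * coshCosKernel β γ x) / 2 +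
        (-1) ^ (n + 1) * (((∫ x in Ioi 0, x ^ (2 * n + 1) / Real.sinh (γ * x)) -
          ∫ x in Ioi 0, x ^ (2 * n + 1) * coshCosKernel γ β x) / 2) := by
    exact_mod_cast hlim
  have hsign : (-1 : ℝ) ^ n * (-1) ^ n = 1 := by rw [← mul_pow]; norm_num
  rw [integral_pow_div_sinh hγ] at hreal
  linear_combination (-2) * hreal + (π / γ) ^ (2 * n + 2) *
    ((2 ^ (2 * n + 2) - 1) * bernoulli (2 * n + 2) / (2 * n + 2)) * hsign

end Moments

section EllipticIntegral

lemma ellipticK_pos {k : ℝ} (hk : k ^ 2 < 1) : 0 < ellipticK k := by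
  have hpos (θ : ℝ) : 0 < 1 - k ^ 2 * Real.sin θ ^ 2 := by
    nlinarith [Real.sin_sq_le_one θ, sq_nonneg k, sq_nonneg (Real.sin θ)]
  have hcont : Continuous fun θ ↦ (1 - k ^ 2 * Real.sin θ ^ 2) ^ (-(1 / 2) : ℝ) :=
    Continuous.rpow_const (by fun_prop) fun θ ↦ Or.inl (hpos θ).ne'
  exact intervalIntegral.intervalIntegral_pos_of_pos (hcont.intervalIntegrable _ _)
    (fun θ ↦ Real.rpow_pos_of_pos (hpos θ) _) Real.pi_div_two_pos

lemma half_mul_integral_pow_mul_comp_sqrt (n : ℕ) (f : ℝ → ℝ) :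
    1 / 2 * ∫ x in Ioi 0, x ^ n * f √x = ∫ y in Ioi 0, y ^ (2 * n + 1) * f y := by
  rw [← integral_comp_rpow_Ioi_of_pos (p := 2) two_pos, ← integral_const_mul]
  refine setIntegral_congr_fun measurableSet_Ioi fun y (hy : 0 < y) ↦ ?_
  have hexponent : (2 : ℝ) - 1 = 1 := by norm_num
  rw [hexponent, Real.rpow_one, Real.rpow_two, Real.sqrt_sq hy.le, smul_eq_mul]
  ring

lemma Iplus_eq_integral_coshCosKernel (k : ℝ) (n : ℕ) :
    Iplus k n =
      (∫ y in Ioi 0, y ^ (2 * n + 1) * coshCosKernel (ellipticK √(1 - k ^ 2)) (ellipticK k) y) +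
        (-1) ^ n * ∫ y in Ioi 0,
          y ^ (2 * n + 1) * coshCosKernel (ellipticK k) (ellipticK √(1 - k ^ 2)) y := by
  rw [← half_mul_integral_pow_mul_comp_sqrt n (coshCosKernel _ _),
    ← half_mul_integral_pow_mul_comp_sqrt n (coshCosKernel _ _)]
  simp only [coshCosKernel, ← div_eq_mul_inv, Iplus, add_comm (Real.cos (ellipticK k * _))]
  ring

end EllipticIntegral

end KuznetsovMoment

theorem Iplus_lambert_series (k : ℝ) (hk : k ∈ Set.Ioo (0 : ℝ) 1) (p : ℕ) (hp : 1 ≤ p) :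
    Iplus k (p - 1) =
      (π / ellipticK k) ^ (2 * p) *
        (-(1 / 2) * ((-((2 ^ (2 * p) - 1) * bernoulli (2 * p)) / p : ℚ) : ℝ) +
          2 * ∑' n : ℕ, ((n : ℝ) + 1) ^ (2 * p - 1) *
            Real.exp (-(π * ellipticK (Real.sqrt (1 - k ^ 2)) / ellipticK k)) ^ (n + 1) /
              (1 + (-Real.exp (-(π * ellipticK (Real.sqrt (1 - k ^ 2)) / ellipticK k))) ^ (n + 1))) := by
  obtain ⟨hk₀, hk₁⟩ := hk
  obtain ⟨n, rfl⟩ := Nat.exists_eq_add_of_le' hp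
  have hsq : k ^ 2 < 1 := pow_lt_one₀ hk₀.le hk₁ two_ne_zero
  have hsq' : √(1 - k ^ 2) ^ 2 < 1 := by
    rw [Real.sq_sqrt (sub_nonneg.2 hsq.le)]
    exact sub_lt_self 1 (pow_pos hk₀ 2)
  have hK := KuznetsovMoment.ellipticK_pos hsq
  have hK' := KuznetsovMoment.ellipticK_pos hsq'
  rw [Nat.add_sub_cancel, KuznetsovMoment.Iplus_eq_integral_coshCosKernel,
    KuznetsovMoment.integral_pow_mul_coshCosKernel_add hK' hK, mul_add_one,
    show 2 * n + 2 - 1 = 2 * n + 1 from rfl]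
  push_cast
  field_simp
end
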